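/- arXiv:1104.5007 — 2 statements merged into one kernel-verified Lean document; each statement's English description precedes it below -/
import Mathlib

section
/- For every fixed odd integer k ≥ 5, with t := ⌊(k−2)/2⌋ = (k−3)/2, there exists a constant C_k such that for every integer n ≥ 1, the maximum number p_k(n) of 1-entries in an n×n (0,1)-matrix that is not (k+1)-full satisfies p_k(n) ≤ n·2^{(1/t!)·α(n)^t·log₂ α(n) + C_k·α(n)^t}. -/
/-! ## Inverse Ackermann hierarchy -/

/-- Bounded-fuel iteration counter: number of applications of `f` needed to bring `m`
down to a value `≤ 1` (assuming `f` strictly decreases on values `≥ 2`). -/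
def iterCount (f : ℕ → ℕ) : ℕ → ℕ → ℕ
  | 0, _ => 0
  | fuel + 1, m => if m ≤ 1 then 0 else 1 + iterCount f fuel (f m)

/-- The inverse Ackermann hierarchy: `alphaHier 1 m = ⌈m/2⌉`, `alphaHier d 1 = 0` for `d ≥ 2`,
and `alphaHier d m = 1 + alphaHier d (alphaHier (d-1) m)` for `m, d ≥ 2`. -/
def alphaHier : ℕ → ℕ → ℕ
  | 0, m => m
  | 1, m => (m + 1) / 2
  | d + 2, m => iterCount (alphaHier (d + 1)) m m

/-- The inverse Ackermann function `α(m) = min {k ≥ 1 : α_k(m) ≤ 3}`. -/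
noncomputable def invAck (m : ℕ) : ℕ := sInf {k : ℕ | 1 ≤ k ∧ alphaHier k m ≤ 3}

/-! ## Permutations, restrictions, VC-dimension -/

/-- The restriction of the `n`-permutation `π` to the (increasing) `k`-tuple of positions `a`
is the `k`-permutation `σ`. -/
def PermRestrictionIs {n k : ℕ} (π : Equiv.Perm (Fin n)) (a : Fin k → Fin n)
    (σ : Equiv.Perm (Fin k)) : Prop :=
  ∀ i j : Fin k, σ i < σ j ↔ π (a i) < π (a j)

/-- The `k`-tuple of positions `a` is shattered by the family `P` of `n`-permutations. -/
def Shatters {n k : ℕ} (P : Finset (Equiv.Perm (Fin n))) (a : Fin k → Fin n) : Prop :=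
  StrictMono a ∧ ∀ σ : Equiv.Perm (Fin k), ∃ π ∈ P, PermRestrictionIs π a σ

/-- The family `P` of `n`-permutations has VC-dimension at most `k`:
no `(k+1)`-tuple of positions is shattered by `P`. -/
def VCDimLE (n k : ℕ) (P : Finset (Equiv.Perm (Fin n))) : Prop :=
  ∀ a : Fin (k + 1) → Fin n, ¬ Shatters P a

/-- The number of `1`-entries of the union of the permutation matrices of a family `P`
of `n`-permutations. -/
noncomputable def permOnes {n : ℕ} (P : Finset (Equiv.Perm (Fin n))) : ℕ :=
  Nat.card {p : Fin n × Fin n // ∃ π ∈ P, π p.2 = p.1}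

/-- `v(P) = |M_P| / n`, the average number of `1`-entries per column of the union
of the permutation matrices of the family `P`. -/
noncomputable def vPerm {n : ℕ} (P : Finset (Equiv.Perm (Fin n))) : ℝ :=
  (permOnes P : ℝ) / (n : ℝ)

/-! ## (0,1)-matrices -/

/-- The number of `1`-entries of a `(0,1)`-matrix (represented as a `Bool` matrix). -/
noncomputable def matOnes {m n : ℕ} (M : Fin m → Fin n → Bool) : ℕ :=
  Nat.card {p : Fin m × Fin n // M p.1 p.2 = true}

/-- The number of `1`-entries in column `j` of a `(0,1)`-matrix. -/
noncomputable def colOnes {m n : ℕ} (M : Fin m → Fin n → Bool) (j : Fin n) : ℕ :=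
  Nat.card {i : Fin m // M i j = true}

/-- The matrix `B` contains the matrix `S`. -/
def MatContains {m n p q : ℕ} (B : Fin m → Fin n → Bool) (S : Fin p → Fin q → Bool) : Prop :=
  ∃ (r : Fin p → Fin m) (c : Fin q → Fin n), StrictMono r ∧ StrictMono c ∧
    ∀ a b, S a b = true → B (r a) (c b) = true

/-- The `s × 2` matrix `DS_s`, with a `1`-entry in (1-indexed) row `i` and column `j`
exactly when `i + j` is odd. -/
def DS (s : ℕ) : Fin s → Fin 2 → Bool :=
  fun i j => decide ((i.val + j.val) % 2 = 1)

/-- The maximum number of `1`-entries in an `n × n` matrix avoiding `S`. -/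
noncomputable def exMat {p q : ℕ} (S : Fin p → Fin q → Bool) (n : ℕ) : ℕ :=
  sSup {x : ℕ | ∃ M : Fin n → Fin n → Bool, ¬ MatContains M S ∧ matOnes M = x}

/-- An `n × n` matrix is `k`-full if some increasing `k`-tuple of columns contains
every `k`-permutation matrix. -/
def IsFull (k : ℕ) {n : ℕ} (M : Fin n → Fin n → Bool) : Prop :=
  ∃ c : Fin k → Fin n, StrictMono c ∧ ∀ σ : Equiv.Perm (Fin k),
    ∃ r : Fin k → Fin n, StrictMono r ∧ ∀ b : Fin k, M (r (σ b)) (c b) = true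

/-- `pFull k n` is the maximum number of `1`-entries in an `n × n` matrix that is
not `(k+1)`-full. -/
noncomputable def pFull (k n : ℕ) : ℕ :=
  sSup {x : ℕ | ∃ M : Fin n → Fin n → Bool, ¬ IsFull (k + 1) M ∧ matOnes M = x}

/-! ## Formations -/

/-- `M` contains a `B`-fat `(r,s)`-formation: there are an `s`-partition of the rows into
intervals (the fibers of a monotone map `g`) and `r` columns, each having at least `B`
`1`-entries in every interval. -/
def FatFormation (B r s : ℕ) {m n : ℕ} (M : Fin m → Fin n → Bool) : Prop :=
  ∃ g : Fin m → Fin s, Monotone g ∧ ∃ c : Fin r → Fin n, StrictMono c ∧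
    ∀ (j : Fin r) (i : Fin s), B ≤ Nat.card {x : Fin m // g x = i ∧ M x (c j) = true}

/-- `M` contains a doubled `(r,s)`-formation: there are an `s`-partition of the rows into
intervals and `r` columns, each having at least one `1`-entry in the first and last
interval and at least two `1`-entries in every other interval. -/
def DoubledFormation (r s : ℕ) {m n : ℕ} (M : Fin m → Fin n → Bool) : Prop :=
  ∃ g : Fin m → Fin s, Monotone g ∧ ∃ c : Fin r → Fin n, StrictMono c ∧
    ∀ (j : Fin r) (i : Fin s),
      1 ≤ Nat.card {x : Fin m // g x = i ∧ M x (c j) = true} ∧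
      (i.val ≠ 0 → i.val ≠ s - 1 → 2 ≤ Nat.card {x : Fin m // g x = i ∧ M x (c j) = true})

/-! ## The functions R, D, β -/

/-- Nivasch's hierarchy `R_s(d)` (shifted as in the paper). -/
def Rfun : ℕ → ℕ → ℕ
  | 0, _ => 0
  | 1, _ => 0
  | 2, _ => 2
  | 3, _ => 3
  | 4, d => 2 * d + 1
  | _ + 5, 0 => 0
  | _ + 5, 1 => 0
  | s + 5, 2 => 2 ^ (s + 3) + 1
  | s + 5, d + 3 =>
      2 * (Rfun (s + 4) (d + 3) - 1) + (Rfun (s + 3) (d + 3) - 1) * (Rfun (s + 5) (d + 2) - 3) + 1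
  termination_by s d => (s, d)

/-- The hierarchy `D_s(d)`. -/
def Dfun : ℕ → ℕ → ℕ
  | 0, _ => 0
  | 1, _ => 0
  | 2, _ => 2
  | _ + 3, 0 => 0
  | _ + 3, 1 => 0
  | s + 3, 2 => 2 ^ (s + 2) + 2 ^ (s + 1) - 1
  | s + 3, d + 3 =>
      2 * Dfun (s + 2) (d + 3) + (Dfun (s + 1) (d + 3) + 1) * (Rfun (s + 3) (d + 2) - 3)
        + Dfun (s + 3) (d + 2) - Rfun (s + 3) (d + 2) + 1
  termination_by s d => (s, d)

/-- `β_s(m) = D_s(α(m))`. -/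
noncomputable def betaFun (s m : ℕ) : ℕ := Dfun s (invAck m)

/-! ## Sequences: MST and formations in sequences -/

/-- The list of column indices of the `1`-entries of a row, in increasing order. -/
def rowList {n : ℕ} (row : Fin n → Bool) : List (Fin n) :=
  (List.finRange n).filter (fun j => row j)

/-- The matrix → sequence transformation: read the rows top to bottom, writing for each
`1`-entry the index of its column. -/
def MST {m n : ℕ} (M : Fin m → Fin n → Bool) : List (Fin n) :=
  ((List.finRange m).map (fun i => rowList (M i))).flatten

/-- The list `L` contains an `(r,s)`-formation as a subsequence: a concatenation of `s`
permutations of the same `r`-element set of symbols is a sublist of `L`. -/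
def IsFormationSeq {A : Type*} [DecidableEq A] (r s : ℕ) (L : List A) : Prop :=
  ∃ (T : Finset A) (F : List (List A)), T.card = r ∧ F.length = s ∧
    (∀ l ∈ F, l.Nodup ∧ l.toFinset = T) ∧ List.Sublist F.flatten L

/-! ## Own development -/

namespace PkProof

/-! ### The inverse Ackermann hierarchy -/

lemma iterCount_fuel (f : ℕ → ℕ) (hf : ∀ m, 2 ≤ m → f m < m) :
    ∀ m fuel fuel', m ≤ fuel → m ≤ fuel' → iterCount f fuel m = iterCount f fuel' m := by
  intro m
  induction m using Nat.strong_induction_on with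
  | _ m ih =>
    intro a b ha hb
    by_cases h : m ≤ 1
    · cases a <;> cases b <;> simp [iterCount, h]
    · obtain ⟨a, rfl⟩ : ∃ a', a = a' + 1 := ⟨a - 1, by omega⟩
      obtain ⟨b, rfl⟩ : ∃ a', b = a' + 1 := ⟨b - 1, by omega⟩
      have := hf m (by omega)
      simp only [iterCount, h, if_false]
      rw [ih (f m) this a b (by omega) (by omega)]

lemma alpha_small (d m : ℕ) (hm : m ≤ 1) : alphaHier (d + 2) m = 0 := by
  rw [alphaHier]
  cases m <;> simp [iterCount]
  omega

lemma alpha_rec_of (d m : ℕ) (hf : ∀ m, 2 ≤ m → alphaHier (d + 1) m < m) (hm : 2 ≤ m) :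
    alphaHier (d + 2) m = 1 + alphaHier (d + 2) (alphaHier (d + 1) m) := by
  obtain ⟨a, rfl⟩ : ∃ a', m = a' + 1 := ⟨m - 1, by omega⟩
  have h := hf (a + 1) hm
  rw [alphaHier, alphaHier, iterCount, if_neg (by omega)]
  rw [iterCount_fuel _ hf _ a _ (by omega) le_rfl]

lemma alpha_lt (d : ℕ) : ∀ m, 2 ≤ m → alphaHier (d + 1) m < m := by
  induction d with
  | zero => intro m hm; simp only [alphaHier]; omega
  | succ d ih =>
    have key : ∀ m, 1 ≤ m → alphaHier (d + 2) m < m := by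
      intro m
      induction m using Nat.strong_induction_on with
      | _ m ihm =>
        intro hm
        by_cases h : m ≤ 1
        · rw [alpha_small d m h]; omega
        · rw [alpha_rec_of d m ih (by omega)]
          have h1 := ih m (by omega)
          by_cases h2 : 1 ≤ alphaHier (d + 1) m
          · have := ihm _ h1 h2
            omega
          · rw [alpha_small d (alphaHier (d + 1) m) (by omega)]; omega
    intro m hm
    exact key m (by omega)

lemma alpha_rec (d m : ℕ) (hm : 2 ≤ m) :
    alphaHier (d + 2) m = 1 + alphaHier (d + 2) (alphaHier (d + 1) m) :=
  alpha_rec_of d m (alpha_lt d) hm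

lemma alpha_mono (d : ℕ) : ∀ b a, a ≤ b → alphaHier (d + 1) a ≤ alphaHier (d + 1) b := by
  induction d with
  | zero => intro b a h; simp only [alphaHier]; omega
  | succ d ih =>
    intro b
    induction b using Nat.strong_induction_on with
    | _ b ihb =>
      intro a hab
      by_cases h : a ≤ 1
      · rw [alpha_small d a h]; omega
      · rw [alpha_rec d a (by omega), alpha_rec d b (by omega)]
        exact Nat.add_le_add_left (ihb _ (alpha_lt d b (by omega)) _ (ih b a hab)) 1

lemma alpha_half (d : ℕ) : ∀ m, alphaHier (d + 1) m ≤ (m + 1) / 2 := by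
  induction d with
  | zero => intro m; simp only [alphaHier]; omega
  | succ d ih =>
    intro m
    induction m using Nat.strong_induction_on with
    | _ m ihm =>
      by_cases h : m ≤ 1
      · rw [alpha_small d m h]; omega
      · rw [alpha_rec d m (by omega)]
        have h1 := ih m
        have h3 := alpha_lt d m (by omega)
        have h2 : alphaHier (d + 2) (alphaHier (d + 1) m) ≤ _ := ihm _ h3
        by_cases h4 : alphaHier (d + 1) m ≤ 1
        · rw [alpha_small d _ h4]; omega
        · omega

lemma alpha_dec (d m : ℕ) (h : 4 ≤ alphaHier (d + 1) m) :
    alphaHier (d + 2) m < alphaHier (d + 1) m := by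
  have hm : 2 ≤ m := by
    have := alpha_half d m
    omega
  rw [alpha_rec d m hm]
  have := alpha_half (d + 1) (alphaHier (d + 1) m)
  simp only [Nat.add_assoc] at this
  norm_num at this
  omega

lemma alpha_exists (m : ℕ) : ∃ k, 1 ≤ k ∧ alphaHier k m ≤ 3 := by
  by_contra hcon
  push Not at hcon
  have : ∀ d, alphaHier (d + 1) m + d ≤ alphaHier 1 m := by
    intro d
    induction d with
    | zero => simp
    | succ d ih =>
      have := alpha_dec d m (hcon (d + 1) (by omega))
      show alphaHier (d + 2) m + _ ≤ _
      omega
  have h1 := this (alphaHier 1 m)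
  have h2 := hcon (alphaHier 1 m + 1) (by omega)
  omega

lemma invAck_spec (m : ℕ) : 1 ≤ invAck m ∧ alphaHier (invAck m) m ≤ 3 :=
  Nat.sInf_mem (s := {k : ℕ | 1 ≤ k ∧ alphaHier k m ≤ 3}) (alpha_exists m)

/-! ### Formations and counting bounds -/

/-- The columns of `C` (column `c` has its 1-entries in the rows `S c`) avoid
`(r,s)`-formations. -/
def Avoid (r s : ℕ) {ι : Type} (C : Finset ι) (S : ι → Finset ℕ) : Prop :=
  ∀ T : Finset ι, T ⊆ C → T.card = r → ∀ g : ℕ → ℕ, Monotone g →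
    ¬ ∀ c ∈ T, ∀ i < s, ∃ x ∈ S c, g x = i

/-- At most `N` columns, each with more than `p` ones, on `m` consecutive rows. -/
def Bd (r s p m N : ℕ) : Prop :=
  ∀ (ι : Type) (C : Finset ι) (S : ι → Finset ℕ) (a : ℕ),
    (∀ c ∈ C, S c ⊆ Finset.Ico a (a + m) ∧ p < (S c).card) → Avoid r s C S → C.card ≤ N

lemma Bd.mono {r s p m N N' : ℕ} (h : Bd r s p m N) (hN : N ≤ N') : Bd r s p m N' :=
  fun ι C S a h1 h2 => (h ι C S a h1 h2).trans hN

lemma Avoid.sub {r s : ℕ} {ι : Type} {C C' : Finset ι} {S S' : ι → Finset ℕ}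
    (h : Avoid r s C S) (hC : C' ⊆ C) (hS : ∀ c ∈ C', S' c ⊆ S c) : Avoid r s C' S' := by
  intro T hT hr g hg hcon
  refine h T (hT.trans hC) hr g hg fun c hc i hi => ?_
  obtain ⟨x, hx, hxi⟩ := hcon c hc i hi
  exact ⟨x, hS c (hT hc) hx, hxi⟩

lemma Avoid.append {r s : ℕ} {ι : Type} {C C' : Finset ι} {S S' : ι → Finset ℕ}
    (h : Avoid r (s + 1) C S) (b : ℕ) (hC : C' ⊆ C) (hS : ∀ c ∈ C', S' c ⊆ S c)
    (hb : ∀ c ∈ C', ∀ x ∈ S' c, x < b) (hy : ∀ c ∈ C', ∃ y ∈ S c, b ≤ y) :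
    Avoid r s C' S' := by
  intro T hT hr g hg hcon
  refine h T (hT.trans hC) hr (fun x => if x < b then min (g x) s else s) ?_ ?_
  · intro x y hxy
    have := hg hxy
    dsimp only
    split_ifs <;> omega
  · intro c hc i hi
    by_cases his : i < s
    · obtain ⟨x, hx, hxi⟩ := hcon c hc i his
      refine ⟨x, hS c (hT hc) hx, ?_⟩
      have := hb c (hT hc) x hx
      simp only [this, if_true]
      omega
    · obtain ⟨y, hy, hby⟩ := hy c (hT hc)
      refine ⟨y, hy, ?_⟩
      rw [if_neg (by omega)]
      omega

lemma Avoid.prepend {r s : ℕ} {ι : Type} {C C' : Finset ι} {S S' : ι → Finset ℕ}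
    (h : Avoid r (s + 1) C S) (b : ℕ) (hC : C' ⊆ C) (hS : ∀ c ∈ C', S' c ⊆ S c)
    (hb : ∀ c ∈ C', ∀ x ∈ S' c, b ≤ x) (hy : ∀ c ∈ C', ∃ y ∈ S c, y < b) :
    Avoid r s C' S' := by
  intro T hT hr g hg hcon
  refine h T (hT.trans hC) hr (fun x => if x < b then 0 else g x + 1) ?_ ?_
  · intro x y hxy
    have := hg hxy
    dsimp only
    split_ifs <;> omega
  · intro c hc i hi
    by_cases his : 0 < i
    · obtain ⟨x, hx, hxi⟩ := hcon c hc (i - 1) (by omega)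
      refine ⟨x, hS c (hT hc) hx, ?_⟩
      have := hb c (hT hc) x hx
      rw [if_neg (by omega)]
      omega
    · obtain ⟨y, hy, hby⟩ := hy c (hT hc)
      refine ⟨y, hy, ?_⟩
      rw [if_pos hby]
      omega

lemma Avoid.contract {r s : ℕ} {ι : Type} {C : Finset ι} {S : ι → Finset ℕ}
    (h : Avoid r s C S) (q : ℕ → ℕ) (hq : Monotone q) :
    Avoid r s C (fun c => (S c).image q) := by
  intro T hT hr g hg hcon
  refine h T hT hr (g ∘ q) (hg.comp hq) fun c hc i hi => ?_
  obtain ⟨x, hx, hxi⟩ := hcon c hc i hi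
  obtain ⟨y, hy, rfl⟩ := Finset.mem_image.1 hx
  exact ⟨y, hy, hxi⟩

/-- The main recurrence. -/
lemma Bd.recur {r s p p1 p2 p3 t g N0 N1 N2 N3 : ℕ} (ht : 0 < t)
    (h0 : Bd r (s + 2) p t N0) (h1 : Bd r (s + 1) p1 t N1) (h2 : Bd r s p2 t N2)
    (h3 : Bd r (s + 2) p3 g N3) (hp : 2 * p1 + p2 * p3 ≤ p) :
    Bd r (s + 2) p (t * g) (g * (N0 + 2 * N1 + N2) + N3) := by
  classical
  intro ι C S a hC hA
  set q : ℕ → ℕ := fun x => (x - a) / t with hqdef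
  have hq : Monotone q := fun x y hxy => Nat.div_le_div_right (Nat.sub_le_sub_right hxy a)
  have hqS : ∀ c ∈ C, ∀ x ∈ S c, q x < g := by
    intro c hc x hx
    have := Finset.mem_Ico.1 ((hC c hc).1 hx)
    exact Nat.div_lt_of_lt_mul (by omega)
  have hqI : ∀ c ∈ C, ∀ x ∈ S c, ∀ G, q x = G ↔ a + t * G ≤ x ∧ x < a + t * G + t := by
    intro c hc x hx G
    have := Finset.mem_Ico.1 ((hC c hc).1 hx)
    simp only [hqdef]
    rw [Nat.div_eq_iff ht]
    rw [mul_comm G t]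
    omega
  have hlt : ∀ c ∈ C, ∀ y ∈ S c, ∀ G, q y < G → y < a + t * G := by
    intro c hc x hx G hG
    have := (hqI c hc x hx (q x)).1 rfl
    have h : t * (q x + 1) ≤ t * G := Nat.mul_le_mul_left t hG
    rw [Nat.mul_succ] at h
    omega
  have hgt : ∀ c ∈ C, ∀ y ∈ S c, ∀ G, G < q y → a + t * G + t ≤ y := by
    intro c hc x hx G hG
    have := (hqI c hc x hx (q x)).1 rfl
    have h : t * (G + 1) ≤ t * q x := Nat.mul_le_mul_left t hG
    rw [Nat.mul_succ] at h
    omega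
  let SG : ℕ → ι → Finset ℕ := fun G c => (S c).filter (fun x => q x = G)
  have hSG : ∀ G, ∀ c ∈ C, SG G c ⊆ Finset.Ico (a + t * G) (a + t * G + t) := by
    intro G c hc x hx
    obtain ⟨hx, hxG⟩ := Finset.mem_filter.1 hx
    exact Finset.mem_Ico.2 ((hqI c hc x hx G).1 hxG)
  have hSGS : ∀ G c, SG G c ⊆ S c := fun G c => Finset.filter_subset _ _
  let CA : ℕ → Finset ι := fun G => C.filter (fun c => ∀ x ∈ S c, q x = G)
  let CB : ℕ → Finset ι := fun G => C.filter (fun c => p1 < (SG G c).card ∧ ∃ y ∈ S c, G < q y)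
  let CE : ℕ → Finset ι := fun G => C.filter (fun c => p1 < (SG G c).card ∧ ∃ y ∈ S c, q y < G)
  let CD : ℕ → Finset ι := fun G => C.filter (fun c => p2 < (SG G c).card ∧
    (∃ y ∈ S c, q y < G) ∧ ∃ y ∈ S c, G < q y)
  let CF : Finset ι := C.filter (fun c => p3 < ((S c).image q).card)
  have cA : ∀ G, (CA G).card ≤ N0 := by
    intro G
    refine h0 ι (CA G) S (a + t * G) ?_ (hA.sub (Finset.filter_subset _ _) fun c _ => le_rfl)
    intro c hc
    obtain ⟨hc, hcG⟩ := Finset.mem_filter.1 hc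
    refine ⟨fun x hx => Finset.mem_Ico.2 ((hqI c hc x hx G).1 (hcG x hx)), (hC c hc).2⟩
  have cB : ∀ G, (CB G).card ≤ N1 := by
    intro G
    refine h1 ι (CB G) (SG G) (a + t * G) ?_
      (hA.append (a + t * G + t) (Finset.filter_subset _ _) (fun c _ => hSGS G c) ?_ ?_)
    · intro c hc
      obtain ⟨hc, hcG, -⟩ := Finset.mem_filter.1 hc
      exact ⟨hSG G c hc, hcG⟩
    · intro c hc x hx
      exact (Finset.mem_Ico.1 (hSG G c (Finset.mem_filter.1 hc).1 hx)).2
    · intro c hc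
      obtain ⟨hc, -, y, hy, hyG⟩ := Finset.mem_filter.1 hc
      exact ⟨y, hy, hgt c hc y hy G hyG⟩
  have cE : ∀ G, (CE G).card ≤ N1 := by
    intro G
    refine h1 ι (CE G) (SG G) (a + t * G) ?_
      (hA.prepend (a + t * G) (Finset.filter_subset _ _) (fun c _ => hSGS G c) ?_ ?_)
    · intro c hc
      obtain ⟨hc, hcG, -⟩ := Finset.mem_filter.1 hc
      exact ⟨hSG G c hc, hcG⟩
    · intro c hc x hx
      exact (Finset.mem_Ico.1 (hSG G c (Finset.mem_filter.1 hc).1 hx)).1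
    · intro c hc
      obtain ⟨hc, -, y, hy, hyG⟩ := Finset.mem_filter.1 hc
      exact ⟨y, hy, hlt c hc y hy G hyG⟩
  have cD : ∀ G, (CD G).card ≤ N2 := by
    intro G
    have hA1 : Avoid r (s + 1) (CD G) (fun c => (S c).filter (fun x => q x ≤ G)) := by
      refine hA.append (a + t * G + t) (Finset.filter_subset _ _)
        (fun c _ => Finset.filter_subset _ _) ?_ ?_
      · intro c hc x hx
        obtain ⟨hc, -⟩ := Finset.mem_filter.1 hc
        obtain ⟨hx, hxG⟩ := Finset.mem_filter.1 hx
        have := hlt c hc x hx (G + 1) (by omega)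
        rwa [Nat.mul_succ, ← add_assoc] at this
      · intro c hc
        obtain ⟨hc, -, -, y, hy, hyG⟩ := Finset.mem_filter.1 hc
        exact ⟨y, hy, hgt c hc y hy G hyG⟩
    refine h2 ι (CD G) (SG G) (a + t * G) ?_
      (hA1.prepend (a + t * G) (Finset.Subset.refl _) ?_ ?_ ?_)
    · intro c hc
      obtain ⟨hc, hcG, -⟩ := Finset.mem_filter.1 hc
      exact ⟨hSG G c hc, hcG⟩
    · intro c _ x hx
      obtain ⟨hx, hxG⟩ := Finset.mem_filter.1 hx
      exact Finset.mem_filter.2 ⟨hx, hxG.le⟩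
    · intro c hc x hx
      exact (Finset.mem_Ico.1 (hSG G c (Finset.mem_filter.1 hc).1 hx)).1
    · intro c hc
      obtain ⟨hc, -, ⟨y, hy, hyG⟩, -⟩ := Finset.mem_filter.1 hc
      exact ⟨y, Finset.mem_filter.2 ⟨hy, hyG.le⟩, hlt c hc y hy G hyG⟩
  have cF : CF.card ≤ N3 := by
    refine h3 ι CF (fun c => (S c).image q) 0 ?_
      ((hA.contract q hq).sub (Finset.filter_subset _ _) fun c _ => le_rfl)
    intro c hc
    obtain ⟨hc, hcG⟩ := Finset.mem_filter.1 hc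
    refine ⟨fun x hx => ?_, hcG⟩
    obtain ⟨y, hy, rfl⟩ := Finset.mem_image.1 hx
    have := hqS c hc y hy
    exact Finset.mem_Ico.2 ⟨by omega, by omega⟩
  have hcov : C ⊆ ((Finset.range g).biUnion fun G => CA G ∪ (CB G ∪ CE G) ∪ CD G) ∪ CF := by
    intro c hc
    by_contra hcon
    have hno : ∀ G < g, c ∉ CA G ∧ c ∉ CB G ∧ c ∉ CE G ∧ c ∉ CD G := by
      intro G hG
      refine ⟨?_, ?_, ?_, ?_⟩ <;> intro h <;> apply hcon <;>
        refine Finset.mem_union_left _ (Finset.mem_biUnion.2 ⟨G, Finset.mem_range.2 hG, ?_⟩) <;>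
        simp only [Finset.mem_union] <;> tauto
    have hF : ((S c).image q).card ≤ p3 := by
      by_contra h
      exact hcon (Finset.mem_union_right _ (Finset.mem_filter.2 ⟨hc, by omega⟩))
    have hne : ((S c).image q).Nonempty := by
      have := (hC c hc).2
      exact (Finset.card_pos.1 (by omega)).image q
    obtain ⟨x0, hx0, hq0⟩ := Finset.mem_image.1 (Finset.min'_mem _ hne)
    obtain ⟨x1, hx1, hq1⟩ := Finset.mem_image.1 (Finset.max'_mem _ hne)
    have hmin : ∀ x ∈ S c, q x0 ≤ q x := fun x hx => by
      rw [hq0]; exact Finset.min'_le _ _ (Finset.mem_image_of_mem q hx)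
    have hmax : ∀ x ∈ S c, q x ≤ q x1 := fun x hx => by
      rw [hq1]; exact Finset.le_max' _ _ (Finset.mem_image_of_mem q hx)
    have hlt01 : q x0 < q x1 := by
      by_contra h
      refine (hno (q x0) (hqS c hc x0 hx0)).1 (Finset.mem_filter.2 ⟨hc, fun x hx => ?_⟩)
      have := hmin x hx
      have := hmax x hx
      omega
    have hcard : ∀ G ∈ (S c).image q, (SG G c).card ≤
        ((if G = q x0 then p1 else 0) + (if G = q x1 then p1 else 0)) + p2 := by
      intro G hG
      obtain ⟨x, hx, rfl⟩ := Finset.mem_image.1 hG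
      obtain ⟨-, nB, nE, nD⟩ := hno (q x) (hqS c hc x hx)
      have nB : ¬ (p1 < (SG (q x) c).card ∧ ∃ y ∈ S c, q x < q y) :=
        fun h => nB (Finset.mem_filter.2 ⟨hc, h⟩)
      have nE : ¬ (p1 < (SG (q x) c).card ∧ ∃ y ∈ S c, q y < q x) :=
        fun h => nE (Finset.mem_filter.2 ⟨hc, h⟩)
      have nD : ¬ (p2 < (SG (q x) c).card ∧ (∃ y ∈ S c, q y < q x) ∧ ∃ y ∈ S c, q x < q y) :=
        fun h => nD (Finset.mem_filter.2 ⟨hc, h⟩)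
      by_cases e0 : q x = q x0
      · have : ¬ p1 < (SG (q x) c).card := fun h => nB ⟨h, x1, hx1, by omega⟩
        rw [if_pos e0]; omega
      by_cases e1 : q x = q x1
      · have : ¬ p1 < (SG (q x) c).card := fun h => nE ⟨h, x0, hx0, by omega⟩
        rw [if_pos e1]; omega
      have := hmin x hx
      have := hmax x hx
      have : ¬ p2 < (SG (q x) c).card :=
        fun h => nD ⟨h, ⟨x0, hx0, by omega⟩, ⟨x1, hx1, by omega⟩⟩
      omega
    have hsum : (S c).card = ∑ G ∈ (S c).image q, (SG G c).card :=
      Finset.card_eq_sum_card_image q (S c)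
    have hle := Finset.sum_le_sum hcard
    rw [← hsum, Finset.sum_add_distrib, Finset.sum_add_distrib, Finset.sum_ite_eq',
      Finset.sum_ite_eq', Finset.sum_const, smul_eq_mul,
      if_pos (Finset.mem_image_of_mem q hx0), if_pos (Finset.mem_image_of_mem q hx1)] at hle
    have h4 : ((S c).image q).card * p2 ≤ p2 * p3 := by
      rw [mul_comm]; exact Nat.mul_le_mul_left _ hF
    have := (hC c hc).2
    omega
  calc C.card ≤ _ := Finset.card_le_card hcov
    _ ≤ _ := Finset.card_union_le _ _
    _ ≤ g * (N0 + 2 * N1 + N2) + N3 := by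
      refine Nat.add_le_add ?_ cF
      calc _ ≤ (Finset.range g).card * (N0 + 2 * N1 + N2) := by
            refine Finset.card_biUnion_le_card_mul _ _ _ fun G _ => ?_
            have e1 := Finset.card_union_le (CA G ∪ (CB G ∪ CE G)) (CD G)
            have e2 := Finset.card_union_le (CA G) (CB G ∪ CE G)
            have e3 := Finset.card_union_le (CB G) (CE G)
            have := cA G
            have := cB G
            have := cE G
            have := cD G
            omega
        _ = _ := by rw [Finset.card_range]

lemma Bd.base2 {r : ℕ} (m : ℕ) : Bd r 2 1 m (r * m) := by
  classical
  intro ι C S a hC hA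
  by_contra hcon
  have hex : ∀ c ∈ C, ∃ y ∈ S c, ∃ z ∈ S c, y < z := by
    intro c hc
    obtain ⟨y, hy, z, hz, hyz⟩ := Finset.one_lt_card.1 (hC c hc).2
    rcases lt_or_gt_of_ne hyz with h | h
    · exact ⟨y, hy, z, hz, h⟩
    · exact ⟨z, hz, y, hy, h⟩
  choose! f hf hf2 using hex
  obtain ⟨v, -, hv⟩ := Finset.exists_lt_card_fiber_of_mul_lt_card_of_maps_to
    (s := C) (t := Finset.Ico a (a + m)) (f := f) (n := r) (fun c hc => (hC c hc).1 (hf c hc))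
    (by rw [Nat.card_Ico, mul_comm, Nat.add_sub_cancel_left]; omega)
  obtain ⟨T, hT, hr⟩ := Finset.exists_subset_card_eq hv.le
  refine hA T (hT.trans (Finset.filter_subset _ _)) hr (fun x => if x ≤ v then 0 else 1) ?_ ?_
  · intro x y hxy
    dsimp only
    split_ifs <;> omega
  · intro c hc i hi
    obtain ⟨hcC, rfl⟩ := Finset.mem_filter.1 (hT hc)
    obtain ⟨z, hz, hlt⟩ := hf2 c hcC
    interval_cases i
    · exact ⟨f c, hf c hcC, by simp⟩
    · exact ⟨z, hz, by rw [if_neg (by omega)]⟩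

lemma Bd.base3 {r : ℕ} (m : ℕ) : Bd r 3 2 m (r * m) := by
  classical
  intro ι C S a hC hA
  by_contra hcon
  have hex : ∀ c ∈ C, ∃ y ∈ S c, ∃ x ∈ S c, x < y ∧ ∃ z ∈ S c, y < z := by
    intro c hc
    have h2 := (hC c hc).2
    have hne : (S c).Nonempty := Finset.card_pos.1 (by omega)
    have hc2 : 0 < (((S c).erase ((S c).min' hne)).erase ((S c).max' hne)).card := by
      have := Finset.pred_card_le_card_erase (s := S c) (a := (S c).min' hne)
      have := Finset.pred_card_le_card_erase (s := (S c).erase ((S c).min' hne))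
        (a := (S c).max' hne)
      omega
    obtain ⟨y, hy⟩ := Finset.card_pos.1 hc2
    simp only [Finset.mem_erase] at hy
    refine ⟨y, hy.2.2, _, Finset.min'_mem _ hne, ?_, _, Finset.max'_mem _ hne, ?_⟩
    · exact lt_of_le_of_ne (Finset.min'_le _ _ hy.2.2) (Ne.symm hy.2.1)
    · exact lt_of_le_of_ne (Finset.le_max' _ _ hy.2.2) hy.1
  choose! f hf hf2 using hex
  obtain ⟨v, -, hv⟩ := Finset.exists_lt_card_fiber_of_mul_lt_card_of_maps_to
    (s := C) (t := Finset.Ico a (a + m)) (f := f) (n := r) (fun c hc => (hC c hc).1 (hf c hc))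
    (by rw [Nat.card_Ico, mul_comm, Nat.add_sub_cancel_left]; omega)
  obtain ⟨T, hT, hr⟩ := Finset.exists_subset_card_eq hv.le
  refine hA T (hT.trans (Finset.filter_subset _ _)) hr
    (fun x => if x < v then 0 else if x = v then 1 else 2) ?_ ?_
  · intro x y hxy
    dsimp only
    split_ifs <;> omega
  · intro c hc i hi
    obtain ⟨hcC, rfl⟩ := Finset.mem_filter.1 (hT hc)
    obtain ⟨x, hx, hxlt, z, hz, hlt⟩ := hf2 c hcC
    interval_cases i
    · exact ⟨x, hx, by rw [if_pos hxlt]⟩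
    · exact ⟨f c, hf c hcC, by simp⟩
    · exact ⟨z, hz, by rw [if_neg (by omega), if_neg (by omega)]⟩

lemma Bd.triv {r s p m : ℕ} (h : m ≤ p) : Bd r s p m 0 := by
  intro ι C S a hC _
  by_contra hcon
  obtain ⟨c, hc⟩ := Finset.card_pos.1 (Nat.pos_of_ne_zero (fun h => hcon h.le))
  have h1 := Finset.card_le_card (hC c hc).1
  have h2 := (hC c hc).2
  rw [Nat.card_Ico] at h1
  omega

/-- The threshold functions (`P u d` belongs to formations with `u + 2` parts). -/
def P : ℕ → ℕ → ℕ
  | 0, _ => 1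
  | 1, _ => 2
  | _ + 2, 0 => 2
  | u + 2, d + 1 => 2 * P (u + 1) (d + 1) + P u (d + 1) * P (u + 2) d
  termination_by u d => (u, d)

lemma P_rec (u d : ℕ) :
    P (u + 2) (d + 1) = 2 * P (u + 1) (d + 1) + P u (d + 1) * P (u + 2) d := by
  rw [P]

lemma P_pos (u : ℕ) : ∀ d, 1 ≤ P u d := by
  induction u using Nat.twoStepInduction with
  | zero => intro d; simp [P]
  | one => intro d; simp [P]
  | more u h0 h1 =>
    intro d
    cases d with
    | zero => simp [P]
    | succ d => rw [P_rec]; have := h1 (d + 1); omega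

lemma pow_gain (s i : ℕ) (hs : 4 ≤ s) : i ^ s + 4 * i ^ (s - 1) ≤ (i + 1) ^ s := by
  obtain ⟨s, rfl⟩ : ∃ s', s = s' + 4 := ⟨s - 4, by omega⟩
  clear hs
  induction s with
  | zero => simp only [Nat.zero_add]; norm_num; nlinarith [sq_nonneg i]
  | succ s ih =>
    have e : s + 1 + 4 - 1 = (s + 4 - 1) + 1 := by omega
    rw [e, show s + 1 + 4 = (s + 4) + 1 by ring, pow_succ, pow_succ, pow_succ]
    calc i ^ (s + 4) * i + 4 * (i ^ (s + 4 - 1) * i)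
        = (i ^ (s + 4) + 4 * i ^ (s + 4 - 1)) * i := by ring
      _ ≤ (i + 1) ^ (s + 4) * i := Nat.mul_le_mul_right _ ih
      _ ≤ _ := Nat.mul_le_mul_left _ (by omega)

lemma Bd.level0 {r : ℕ} (u : ℕ) :
    ∀ L, Bd r (u + 2) (P u 1) (2 ^ L) (r * (1 + L) ^ (u + 2) * 2 ^ L) := by
  induction u using Nat.twoStepInduction with
  | zero =>
    intro L
    rw [P]
    refine (Bd.base2 (2 ^ L)).mono (Nat.mul_le_mul_right _ (Nat.le_mul_of_pos_right _ ?_))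
    positivity
  | one =>
    intro L
    rw [P]
    refine (Bd.base3 (2 ^ L)).mono (Nat.mul_le_mul_right _ (Nat.le_mul_of_pos_right _ ?_))
    positivity
  | more u h0 h1 =>
    intro L
    induction L with
    | zero => exact (Bd.triv (by simpa using P_pos (u + 2) 1)).mono (Nat.zero_le _)
    | succ L ih =>
      have h := Bd.recur (t := 2 ^ L) (g := 2) (p3 := 2) (by positivity) ih (h1 L) (h0 L)
        (Bd.triv le_rfl) (by rw [P_rec]; simp [P])
      rw [pow_succ]
      refine h.mono ?_
      have g1 := pow_gain (u + 2 + 2) (1 + L) (by omega)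
      have g2 : (1 + L) ^ (u + 2) ≤ (1 + L) ^ (u + 1 + 2) :=
        Nat.pow_le_pow_right (by omega) (by omega)
      rw [show u + 2 + 2 - 1 = u + 1 + 2 by omega] at g1
      rw [show 1 + (L + 1) = 1 + L + 1 by ring]
      calc _ = r * ((1 + L) ^ (u + 2 + 2) + 2 * (1 + L) ^ (u + 1 + 2) + (1 + L) ^ (u + 2))
            * (2 ^ L * 2) := by ring
        _ ≤ _ := Nat.mul_le_mul_right _ (Nat.mul_le_mul_left _ (by omega))

lemma exists_K (s : ℕ) : ∃ K : ℕ, 1 ≤ K ∧ ∀ x : ℕ, (1 + x) ^ s ≤ K * 2 ^ x := by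
  induction s with
  | zero => exact ⟨1, le_rfl, fun x => by simpa using Nat.one_le_two_pow⟩
  | succ s _ =>
    have h := tendsto_pow_const_div_const_pow_of_one_lt (s + 1) (r := (2 : ℝ)) (by norm_num)
    obtain ⟨B, hB⟩ := h.bddAbove_range
    refine ⟨2 * ⌈B⌉₊ + 1, by omega, fun x => ?_⟩
    have h1 := hB ⟨x + 1, rfl⟩
    simp only at h1
    rw [div_le_iff₀ (by positivity)] at h1
    have h2 : B ≤ (⌈B⌉₊ : ℝ) := Nat.le_ceil B
    have h3 : ((1 + x : ℕ) : ℝ) ^ (s + 1) ≤ ((2 * ⌈B⌉₊ + 1 : ℕ) : ℝ) * 2 ^ x := by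
      push_cast at h1 ⊢
      have h5 : (0 : ℝ) < 2 ^ x := by positivity
      calc (1 + (x : ℝ)) ^ (s + 1) = ((x : ℝ) + 1) ^ (s + 1) := by rw [add_comm]
        _ ≤ B * 2 ^ (x + 1) := h1
        _ = (2 * B) * 2 ^ x := by ring
        _ ≤ _ := by gcongr; linarith
    exact_mod_cast h3

lemma Bd.main (r : ℕ) (u : ℕ) : ∃ c : ℕ, 1 ≤ c ∧ ∀ d L,
    Bd r (u + 2) (P u (d + 1)) (2 ^ L)
      (c ^ (d + 1) * (1 + alphaHier (d + 1) L) ^ (u + 2) * 2 ^ L) := by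
  induction u using Nat.twoStepInduction with
  | zero =>
    refine ⟨r + 1, by omega, fun d L => ?_⟩
    rw [P]
    refine (Bd.base2 (2 ^ L)).mono (Nat.mul_le_mul_right _ ?_)
    calc r ≤ (r + 1) ^ (d + 1) := (Nat.le_succ r).trans (Nat.le_self_pow (by omega) _)
      _ ≤ _ := Nat.le_mul_of_pos_right _ (by positivity)
  | one =>
    refine ⟨r + 1, by omega, fun d L => ?_⟩
    rw [P]
    refine (Bd.base3 (2 ^ L)).mono (Nat.mul_le_mul_right _ ?_)
    calc r ≤ (r + 1) ^ (d + 1) := (Nat.le_succ r).trans (Nat.le_self_pow (by omega) _)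
      _ ≤ _ := Nat.le_mul_of_pos_right _ (by positivity)
  | more u H0 H1 =>
    obtain ⟨c0, hc0, H0⟩ := H0
    obtain ⟨c1, hc1, H1⟩ := H1
    obtain ⟨K, hK, HK⟩ := exists_K (u + 2 + 2)
    set c := c0 + c1 + K + r * 2 ^ (u + 2 + 2) with hc
    refine ⟨c, by omega, fun d => ?_⟩
    induction d with
    | zero =>
      intro L
      refine (Bd.level0 (u + 2) L).mono (Nat.mul_le_mul_right _ ?_)
      have h1 : 1 + L ≤ 2 * (1 + alphaHier (0 + 1) L) := by simp only [alphaHier]; omega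
      calc r * (1 + L) ^ (u + 2 + 2)
          ≤ r * (2 * (1 + alphaHier (0 + 1) L)) ^ (u + 2 + 2) :=
            Nat.mul_le_mul_left _ (Nat.pow_le_pow_left h1 _)
        _ = (r * 2 ^ (u + 2 + 2)) * (1 + alphaHier (0 + 1) L) ^ (u + 2 + 2) := by
            rw [mul_pow]; ring
        _ ≤ _ := Nat.mul_le_mul_right _ (by simp only [Nat.zero_add, pow_one]; omega)
    | succ d ih =>
      intro L
      induction L using Nat.strong_induction_on with
      | _ L ihL =>
        by_cases hL : L ≤ 1
        · refine (Bd.triv ?_).mono (Nat.zero_le _)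
          have h1 : 2 ≤ P (u + 2) (d + 1 + 1) := by
            rw [P_rec]
            have := P_pos (u + 1) (d + 1 + 1)
            omega
          refine le_trans ?_ h1
          exact (Nat.pow_le_pow_right (by norm_num) hL).trans (by norm_num)
        · set L' := alphaHier (d + 1) L with hL'
          have hlt : L' < L := alpha_lt d L (by omega)
          have hrec : alphaHier (d + 1 + 1) L = 1 + alphaHier (d + 1 + 1) L' :=
            alpha_rec d L (by omega)
          have h := Bd.recur (t := 2 ^ L') (g := 2 ^ (L - L')) (by positivity)
            (ihL L' hlt) (H1 (d + 1) L') (H0 (d + 1) L') (ih (L - L')) (P_rec (u + 2 - 2) (d + 1)).ge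
          rw [← pow_add, show L' + (L - L') = L by omega] at h
          refine h.mono ?_
          rw [hrec]
          set i := 1 + alphaHier (d + 1 + 1) L' with hi
          have hi1 : 1 ≤ i := by omega
          have g1 := pow_gain (u + 2 + 2) i (by omega)
          rw [show u + 2 + 2 - 1 = u + 1 + 2 by omega] at g1
          have g2 : i ^ (u + 2) ≤ i ^ (u + 1 + 2) := Nat.pow_le_pow_right (by omega) (by omega)
          have g3 : 1 ≤ i ^ (u + 1 + 2) := Nat.one_le_pow _ _ hi1
          have g4 : alphaHier (d + 1) (L - L') ≤ L' := alpha_mono d _ _ (by omega)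
          have g5 : (1 + alphaHier (d + 1) (L - L')) ^ (u + 2 + 2) ≤ K * 2 ^ L' :=
            (Nat.pow_le_pow_left (by omega) _).trans (HK L')
          have k0 : c0 ^ (d + 1 + 1) ≤ c ^ (d + 1 + 1) := Nat.pow_le_pow_left (by omega) _
          have k1 : c1 ^ (d + 1 + 1) ≤ c ^ (d + 1 + 1) := Nat.pow_le_pow_left (by omega) _
          have k2 : c ^ (d + 1) * K ≤ c ^ (d + 1 + 1) := by
            rw [pow_succ c (d + 1)]; exact Nat.mul_le_mul_left _ (by omega)
          have hpow : 2 ^ (L - L') * 2 ^ L' = 2 ^ L := by rw [← pow_add]; congr 1; omega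
          set X := c ^ (d + 1 + 1) with hX
          set Y := i ^ (u + 1 + 2) with hY
          calc 2 ^ (L - L') * (X * i ^ (u + 2 + 2) * 2 ^ L' +
                2 * (c1 ^ (d + 1 + 1) * Y * 2 ^ L') + c0 ^ (d + 1 + 1) * i ^ (u + 2) * 2 ^ L') +
                c ^ (d + 1) * (1 + alphaHier (d + 1) (L - L')) ^ (u + 2 + 2) * 2 ^ (L - L')
              ≤ 2 ^ (L - L') * (X * i ^ (u + 2 + 2) * 2 ^ L' +
                2 * (X * Y * 2 ^ L') + X * Y * 2 ^ L') +
                c ^ (d + 1) * (K * 2 ^ L') * 2 ^ (L - L') := by gcongr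
            _ = (X * i ^ (u + 2 + 2) + 3 * (X * Y) + c ^ (d + 1) * K)
                * (2 ^ (L - L') * 2 ^ L') := by ring
            _ ≤ (X * i ^ (u + 2 + 2) + 3 * (X * Y) + X * Y) * 2 ^ L := by
                rw [hpow]
                exact Nat.mul_le_mul_right _ (Nat.add_le_add_left
                  (k2.trans (Nat.le_mul_of_pos_right _ g3)) _)
            _ = X * (i ^ (u + 2 + 2) + 4 * Y) * 2 ^ L := by ring
            _ ≤ X * (i + 1) ^ (u + 2 + 2) * 2 ^ L := by gcongr
            _ = _ := by rw [add_comm i 1]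

/-! ### From many-ones columns to all ones -/

lemma Bd.total {r s p m N : ℕ} (hs : 2 ≤ s) (h : Bd r s p m N) {ι : Type} (C : Finset ι)
    (S : ι → Finset ℕ) (hC : ∀ c ∈ C, S c ⊆ Finset.Ico 0 (0 + m)) (hA : Avoid r s C S) :
    ∑ c ∈ C, (S c).card ≤ p * C.card + (p + 1) * N := by
  classical
  let e : ι → ℕ → ℕ := fun c => Nat.nth (fun x => x ∈ S c)
  have hfin : ∀ c, ({x | x ∈ S c} : Set ℕ).Finite := fun c => (S c).finite_toSet
  have hcardf : ∀ c, (hfin c).toFinset.card = (S c).card := by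
    intro c; congr 1; ext x; simp
  have hmem : ∀ c, ∀ i < (S c).card, e c i ∈ S c := fun c i hi =>
    Nat.nth_mem_of_lt_card (hfin c) (by rw [hcardf]; exact hi)
  have hmono : ∀ c, ∀ i j, i < j → j < (S c).card → e c i < e c j := fun c i j hij hj =>
    Nat.nth_lt_nth_of_lt_card (hfin c) hij (by rw [hcardf]; exact hj)
  let q : ι → ℕ := fun c => (S c).card / (p + 1)
  let D : Finset (Σ _ : ι, ℕ) := C.sigma (fun c => Finset.range (q c))
  let S' : (Σ _ : ι, ℕ) → Finset ℕ := fun z =>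
    (Finset.Ico ((p + 1) * z.2) ((p + 1) * z.2 + (p + 1))).image (e z.1)
  have hidx : ∀ c, ∀ j < q c, (p + 1) * j + (p + 1) ≤ (S c).card := by
    intro c j hj
    have h1 : (p + 1) * (j + 1) ≤ (p + 1) * q c := Nat.mul_le_mul_left _ hj
    have h2 : (p + 1) * q c ≤ (S c).card := Nat.mul_div_le _ _
    rw [Nat.mul_succ] at h1
    omega
  have hsub : ∀ z ∈ D, S' z ⊆ S z.1 := by
    intro z hz x hx
    obtain ⟨-, hz2⟩ := Finset.mem_sigma.1 hz
    have := hidx z.1 z.2 (Finset.mem_range.1 hz2)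
    obtain ⟨i, hi, rfl⟩ := Finset.mem_image.1 hx
    have := Finset.mem_Ico.1 hi
    exact hmem z.1 i (by omega)
  have hsep : ∀ z ∈ D, ∀ w ∈ D, z.1 = w.1 → z.2 < w.2 → ∀ x ∈ S' z, ∀ y ∈ S' w, x < y := by
    intro z hz w hw h1 h2 x hx y hy
    obtain ⟨-, hw2⟩ := Finset.mem_sigma.1 hw
    have := hidx w.1 w.2 (Finset.mem_range.1 hw2)
    obtain ⟨i, hi, rfl⟩ := Finset.mem_image.1 hx
    obtain ⟨j, hj, rfl⟩ := Finset.mem_image.1 hy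
    have hi := Finset.mem_Ico.1 hi
    have hj := Finset.mem_Ico.1 hj
    have h3 : (p + 1) * (z.2 + 1) ≤ (p + 1) * w.2 := Nat.mul_le_mul_left _ h2
    rw [Nat.mul_succ] at h3
    rw [h1]
    exact hmono w.1 i j (by omega) (by omega)
  have hD : D.card ≤ N := by
    refine h _ D S' 0 ?_ ?_
    · intro z hz
      obtain ⟨hz1, hz2⟩ := Finset.mem_sigma.1 hz
      refine ⟨(hsub z hz).trans (hC z.1 hz1), ?_⟩
      have hb := hidx z.1 z.2 (Finset.mem_range.1 hz2)
      rw [Finset.card_image_of_injOn]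
      · rw [Nat.card_Ico]; omega
      · intro i hi j hj hij
        have hi := Finset.mem_Ico.1 hi
        have hj := Finset.mem_Ico.1 hj
        rcases lt_trichotomy i j with hl | hl | hl
        · exact absurd hij (hmono z.1 i j hl (by omega)).ne
        · exact hl
        · exact absurd hij.symm (hmono z.1 j i hl (by omega)).ne
    · intro T hT hr g hg hcon
      have hinj : Set.InjOn (fun z : (Σ _ : ι, ℕ) => z.1) T := by
        intro z hz w hw hzw
        have key : ∀ z ∈ T, ∀ w ∈ T, z.1 = w.1 → ¬ z.2 < w.2 := by
          intro z hz w hw hzw hlt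
          obtain ⟨x, hx, hx1⟩ := hcon z hz 1 (by omega)
          obtain ⟨y, hy, hy0⟩ := hcon w hw 0 (by omega)
          have := hg (hsep z (hT hz) w (hT hw) hzw hlt x hx y hy).le
          omega
        have h1 := key z hz w hw hzw
        have h2 := key w hw z hz hzw.symm
        obtain ⟨z1, z2⟩ := z
        obtain ⟨w1, w2⟩ := w
        simp only at hzw h1 h2
        subst hzw
        congr
        omega
      refine hA (T.image (fun z => z.1)) ?_ ?_ g hg ?_
      · intro c hc
        obtain ⟨z, hz, rfl⟩ := Finset.mem_image.1 hc
        exact (Finset.mem_sigma.1 (hT hz)).1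
      · rw [Finset.card_image_of_injOn hinj, hr]
      · intro c hc i hi
        obtain ⟨z, hz, rfl⟩ := Finset.mem_image.1 hc
        obtain ⟨x, hx, hxi⟩ := hcon z hz i hi
        exact ⟨x, hsub z (hT hz) hx, hxi⟩
  have hDc : D.card = ∑ c ∈ C, q c := by
    rw [Finset.card_sigma]; simp
  calc ∑ c ∈ C, (S c).card ≤ ∑ c ∈ C, (p + (p + 1) * q c) := by
        refine Finset.sum_le_sum fun c _ => ?_
        have h1 := Nat.div_add_mod (S c).card (p + 1)
        have h2 := Nat.mod_lt (S c).card (show 0 < p + 1 by omega)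
        show _ ≤ p + (p + 1) * ((S c).card / (p + 1))
        omega
    _ = p * C.card + (p + 1) * D.card := by
        rw [Finset.sum_add_distrib, ← Finset.mul_sum, hDc, Finset.sum_const, smul_eq_mul,
          mul_comm]
    _ ≤ _ := by gcongr

lemma avoid_of_not_full {k n : ℕ} (M : Fin n → Fin n → Bool) (hM : ¬ IsFull k M) :
    Avoid k k (Finset.univ : Finset (Fin n))
      (fun c => (Finset.univ.filter (fun x : Fin n => M x c = true)).image Fin.val) := by
  classical
  intro T _ hr g hg hcon
  apply hM
  refine ⟨T.orderEmbOfFin hr, (T.orderEmbOfFin hr).strictMono, fun σ => ?_⟩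
  have h : ∀ a : Fin k, ∃ x : Fin n,
      M x (T.orderEmbOfFin hr (σ.symm a)) = true ∧ g x.val = a.val := by
    intro a
    obtain ⟨x, hx, hxa⟩ := hcon _ (Finset.orderEmbOfFin_mem T hr (σ.symm a)) a.val a.isLt
    obtain ⟨y, hy, rfl⟩ := Finset.mem_image.1 hx
    exact ⟨y, (Finset.mem_filter.1 hy).2, hxa⟩
  choose f hf1 hf2 using h
  refine ⟨f, ?_, fun b => ?_⟩
  · intro a b hab
    by_contra hle
    have := hg (show (f b).val ≤ (f a).val from not_lt.1 hle)
    rw [hf2, hf2] at this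
    exact absurd hab (not_lt.2 this)
  · have := hf1 (σ b)
    rwa [Equiv.symm_apply_apply] at this

lemma matOnes_eq {n : ℕ} (M : Fin n → Fin n → Bool) :
    matOnes M = ∑ c : Fin n,
      ((Finset.univ.filter (fun x : Fin n => M x c = true)).image Fin.val).card := by
  classical
  have h1 : ∀ c : Fin n,
      ((Finset.univ.filter (fun x : Fin n => M x c = true)).image Fin.val).card
        = ∑ x : Fin n, if M x c = true then 1 else 0 := by
    intro c
    rw [Finset.card_image_of_injective _ Fin.val_injective, Finset.card_filter]
  simp only [h1]
  rw [matOnes, Nat.card_eq_fintype_card, Fintype.card_subtype, Finset.card_filter,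
    Fintype.sum_prod_type, Finset.sum_comm]

lemma pFull_le (k n p N : ℕ) (hk : 1 ≤ k) (h : Bd (k + 1) (k + 1) p n N) :
    pFull k n ≤ p * n + (p + 1) * N := by
  refine csSup_le' ?_
  rintro x ⟨M, hM, rfl⟩
  rw [matOnes_eq]
  have := h.total (by omega) Finset.univ _ ?_ (avoid_of_not_full M hM)
  · simpa using this
  · intro c _ x hx
    obtain ⟨y, -, rfl⟩ := Finset.mem_image.1 hx
    exact Finset.mem_Ico.2 ⟨by omega, by omega⟩

lemma Bd.rows {r s p m m' N : ℕ} (h : Bd r s p m' N) (hm : m ≤ m') : Bd r s p m N := by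
  intro ι C S a hC hA
  refine h ι C S a (fun c hc => ⟨(hC c hc).1.trans ?_, (hC c hc).2⟩) hA
  exact Finset.Ico_subset_Ico_right (by omega)

end PkProof

namespace PkProof

/-! ### Growth of the thresholds -/

open Real in
lemma two_rpow_add_le {a b x : ℝ} (ha : a ≤ x - 1) (hb : b ≤ x - 1) :
    (2 : ℝ) ^ a + (2 : ℝ) ^ b ≤ (2 : ℝ) ^ x := by
  have h1 : (2 : ℝ) ^ a ≤ 2 ^ (x - 1) := Real.rpow_le_rpow_of_exponent_le (by norm_num) ha
  have h2 : (2 : ℝ) ^ b ≤ 2 ^ (x - 1) := Real.rpow_le_rpow_of_exponent_le (by norm_num) hb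
  have h3 : (2 : ℝ) ^ x = 2 ^ (x - 1) * 2 := by
    rw [← Real.rpow_add_one (by norm_num)]; congr 1; ring
  linarith

lemma nat_le_two_rpow (x : ℕ) : (x : ℝ) ≤ (2 : ℝ) ^ (x : ℝ) := by
  rw [Real.rpow_natCast]
  exact_mod_cast (Nat.lt_two_pow_self).le

lemma logb_le_self (d : ℕ) (hd : 1 ≤ d) : Real.logb 2 d ≤ d := by
  rw [Real.logb_le_iff_le_rpow (by norm_num) (by exact_mod_cast hd)]
  exact nat_le_two_rpow d

lemma logb_nonneg' (d : ℕ) (hd : 1 ≤ d) : 0 ≤ Real.logb 2 d :=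
  Real.logb_nonneg (by norm_num) (by exact_mod_cast hd)

/-- `(x-1)^(t+1) ≤ x^(t+1) - x^t`. -/
lemma pow_drop (t : ℕ) (x : ℝ) (hx : 1 ≤ x) : (x - 1) ^ (t + 1) ≤ x ^ (t + 1) - x ^ t := by
  have h : (x - 1) ^ t ≤ x ^ t := pow_le_pow_left₀ (by linarith) (by linarith) t
  calc (x - 1) ^ (t + 1) = (x - 1) ^ t * (x - 1) := pow_succ _ _
    _ ≤ x ^ t * (x - 1) := mul_le_mul_of_nonneg_right h (by linarith)
    _ = _ := by ring

/-- Second-order version. -/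
lemma pow_drop2 (t : ℕ) : ∃ K : ℝ, 0 ≤ K ∧ ∀ x : ℝ, 1 ≤ x →
    (x - 1) ^ (t + 1) ≤ x ^ (t + 1) - (t + 1) * x ^ t + K * (x ^ t / x) := by
  induction t with
  | zero => exact ⟨0, le_rfl, fun x hx => by simp⟩
  | succ t ih =>
    obtain ⟨K, hK, h⟩ := ih
    refine ⟨K + (t + 1), by positivity, fun x hx => ?_⟩
    have hx0 : x ≠ 0 := by linarith
    have h1 := mul_le_mul_of_nonneg_right (h x hx) (show 0 ≤ x - 1 by linarith)
    have e : x ^ (t + 1) / x = x ^ t := by rw [pow_succ]; field_simp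
    have e2 : x ^ t / x * x = x ^ t := by field_simp
    have e3 : 0 ≤ K * (x ^ t / x) := by positivity
    rw [e, pow_succ (x - 1) (t + 1)]
    push_cast
    refine h1.trans ?_
    have : (x ^ (t + 1) - (t + 1) * x ^ t + K * (x ^ t / x)) * (x - 1) =
      x ^ (t + 1 + 1) - (t + 1 + 1) * x ^ (t + 1) + (K * (x ^ t / x * x) + (t + 1) * x ^ t)
        - K * (x ^ t / x) := by ring
    rw [this, e2]
    linarith

/-- Even-index estimate. -/
def EB (t : ℕ) : Prop := ∃ C : ℝ, 0 ≤ C ∧ ∀ d : ℕ, 1 ≤ d →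
  (P (2 * t + 2) d : ℝ) ≤ (2 : ℝ) ^ ((1 / (Nat.factorial t : ℝ)) * (d : ℝ) ^ t * Real.logb 2 d
    + C * (d : ℝ) ^ t)

/-- Odd-index estimate. -/
def OB (t : ℕ) : Prop := ∃ C : ℝ, 0 ≤ C ∧ ∀ d : ℕ, 1 ≤ d →
  (P (2 * t + 1) d : ℝ) ≤ (2 : ℝ) ^ (C * (d : ℝ) ^ t)

lemma OB_zero : OB 0 := ⟨1, by norm_num, fun d _ => by simp [P]⟩

lemma P_two (d : ℕ) : P 2 d = 4 * d + 2 := by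
  induction d with
  | zero => simp [P]
  | succ d ih => rw [P_rec 0 d, ih]; simp [P]; ring

lemma EB_zero : EB 0 := by
  refine ⟨3, by norm_num, fun d hd => ?_⟩
  have hd' : (1 : ℝ) ≤ d := by exact_mod_cast hd
  simp only [Nat.mul_zero, Nat.zero_add, P_two, Nat.factorial_zero, Nat.cast_one, pow_zero,
    mul_one, div_one, one_mul]
  rw [Real.rpow_add (by norm_num), Real.rpow_logb (by norm_num) (by norm_num) (by linarith)]
  push_cast
  norm_num
  linarith

lemma OB_succ (t : ℕ) (hE : EB t) (hO : OB t) : OB (t + 1) := by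
  obtain ⟨CE, hCE, hE⟩ := hE
  obtain ⟨CO, hCO, hO⟩ := hO
  set A : ℝ := (P (2 * (t + 1) + 1) 1 : ℝ) with hA
  have hA0 : 0 ≤ A := by positivity
  have hf1 : (1 : ℝ) / (Nat.factorial t : ℝ) ≤ 1 := by
    rw [div_le_one (by positivity)]
    exact_mod_cast Nat.one_le_iff_ne_zero.2 (Nat.factorial_ne_zero t)
  set C := A + CE + CO + 3 with hC
  refine ⟨C, by positivity, fun d hd => ?_⟩
  induction d, hd using Nat.le_induction with
  | base =>
    refine (nat_le_two_rpow _).trans (Real.rpow_le_rpow_of_exponent_le (by norm_num) ?_)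
    simp only [Nat.cast_one, one_pow, mul_one]
    linarith
  | succ d hd ih =>
    have hP : P (2 * (t + 1) + 1) (d + 1) = 2 * P (2 * t + 2) (d + 1) +
      P (2 * t + 1) (d + 1) * P (2 * (t + 1) + 1) d := P_rec (2 * t + 1) d
    have hE' := hE (d + 1) (by omega)
    have hO' := hO (d + 1) (by omega)
    have hl := logb_le_self (d + 1) (by omega)
    have hl0 := logb_nonneg' (d + 1) (by omega)
    have hx1 : (1 : ℝ) ≤ ((d + 1 : ℕ) : ℝ) := by exact_mod_cast (show 1 ≤ d + 1 by omega)
    have hdx : (d : ℝ) = ((d + 1 : ℕ) : ℝ) - 1 := by push_cast; ring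
    rw [hdx] at ih
    set x : ℝ := ((d + 1 : ℕ) : ℝ) with hx
    have hd1 := pow_drop t x hx1
    have hxt : 1 ≤ x ^ t := one_le_pow₀ hx1
    have hxt1 : x ^ t ≤ x ^ (t + 1) := pow_le_pow_right₀ hx1 (by omega)
    rw [hP]
    push_cast
    calc 2 * (P (2 * t + 2) (d + 1) : ℝ) + P (2 * t + 1) (d + 1) * P (2 * (t + 1) + 1) d
        ≤ (2 : ℝ) ^ (1 + (1 / (Nat.factorial t : ℝ) * x ^ t * Real.logb 2 x + CE * x ^ t)) +
          (2 : ℝ) ^ (CO * x ^ t + C * (x - 1) ^ (t + 1)) := by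
          rw [Real.rpow_add (by norm_num), Real.rpow_add (by norm_num : (0 : ℝ) < 2) (CO * x ^ t),
            Real.rpow_one]
          gcongr
      _ ≤ _ := by
          apply two_rpow_add_le
          · have e1 : 1 / (Nat.factorial t : ℝ) * x ^ t * Real.logb 2 x ≤ 1 * x ^ t * x := by
              gcongr
            have e2 : CE * x ^ t ≤ CE * x ^ (t + 1) := by gcongr
            have e3 : (A + CO) * 1 ≤ (A + CO) * x ^ (t + 1) := by
              gcongr; linarith
            rw [pow_succ] at *
            nlinarith
          · have e1 : C * (x - 1) ^ (t + 1) ≤ C * (x ^ (t + 1) - x ^ t) := by gcongr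
            have e2 : (A + CE + 3) * 1 ≤ (A + CE + 3) * x ^ t := by gcongr
            nlinarith

lemma EB_succ (t : ℕ) (hE : EB t) (hO : OB (t + 1)) : EB (t + 1) := by
  obtain ⟨CE, hCE, hE⟩ := hE
  obtain ⟨CO, hCO, hO⟩ := hO
  obtain ⟨K, hK, hdrop⟩ := pow_drop2 t
  set A : ℝ := (P (2 * (t + 1) + 2) 1 : ℝ) with hA
  have hA0 : 0 ≤ A := by positivity
  set F : ℝ := 1 / (Nat.factorial (t + 1) : ℝ) with hF
  have hF0 : 0 ≤ F := by positivity
  have hF1 : F ≤ 1 := by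
    rw [hF, div_le_one (by positivity)]
    exact_mod_cast Nat.one_le_iff_ne_zero.2 (Nat.factorial_ne_zero (t + 1))
  have hFt : 1 / (Nat.factorial t : ℝ) = F * (t + 1) := by
    rw [hF, Nat.factorial_succ]; push_cast; field_simp
  set C := A + CE + CO + K + 2 with hC
  have hC0 : 0 ≤ C := by positivity
  refine ⟨C, hC0, fun d hd => ?_⟩
  induction d, hd using Nat.le_induction with
  | base =>
    refine (nat_le_two_rpow _).trans (Real.rpow_le_rpow_of_exponent_le (by norm_num) ?_)
    simp only [Nat.cast_one, one_pow, mul_one, Real.logb_one, mul_zero, zero_add]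
    linarith
  | succ d hd ih =>
    have hP : P (2 * (t + 1) + 2) (d + 1) = 2 * P (2 * (t + 1) + 1) (d + 1) +
      P (2 * t + 2) (d + 1) * P (2 * (t + 1) + 2) d := P_rec (2 * t + 2) d
    have hE' := hE (d + 1) (by omega)
    have hO' := hO (d + 1) (by omega)
    have hl := logb_le_self (d + 1) (by omega)
    have hl0 := logb_nonneg' (d + 1) (by omega)
    have hx1 : (1 : ℝ) ≤ ((d + 1 : ℕ) : ℝ) := by exact_mod_cast (show 1 ≤ d + 1 by omega)
    have hdx : (d : ℝ) = ((d + 1 : ℕ) : ℝ) - 1 := by push_cast; ring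
    have hd0 : (1 : ℝ) ≤ d := by exact_mod_cast hd
    rw [hdx] at ih hd0
    rw [hFt] at hE'
    set x : ℝ := ((d + 1 : ℕ) : ℝ) with hx
    have hd1 := pow_drop t x hx1
    have hd2 := hdrop x hx1
    have hxt : 1 ≤ x ^ t := one_le_pow₀ hx1
    have hxt1 : x ^ t ≤ x ^ (t + 1) := pow_le_pow_right₀ hx1 (by omega)
    set l := Real.logb 2 x with hldef
    have hll : Real.logb 2 (x - 1) ≤ l :=
      Real.logb_le_logb_of_le (by norm_num) (by linarith) (by linarith)
    rw [hP]
    push_cast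
    calc 2 * (P (2 * (t + 1) + 1) (d + 1) : ℝ) + P (2 * t + 2) (d + 1) * P (2 * (t + 1) + 2) d
        ≤ (2 : ℝ) ^ (1 + CO * x ^ (t + 1)) +
          (2 : ℝ) ^ ((F * (t + 1) * x ^ t * l + CE * x ^ t) +
            (F * (x - 1) ^ (t + 1) * Real.logb 2 (x - 1) + C * (x - 1) ^ (t + 1))) := by
          rw [Real.rpow_add (by norm_num),
            Real.rpow_add (by norm_num : (0 : ℝ) < 2) (F * (t + 1) * x ^ t * l + CE * x ^ t),
            Real.rpow_one]
          gcongr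
      _ ≤ _ := by
          apply two_rpow_add_le
          · have e0 : 0 ≤ F * x ^ (t + 1) * l := by positivity
            have e3 : (A + CE + K + 2) * 1 ≤ (A + CE + K + 2) * x ^ (t + 1) := by
              gcongr; linarith
            nlinarith
          · have hxm : 0 ≤ (x - 1) ^ (t + 1) := pow_nonneg (by linarith) _
            have e1 : C * (x - 1) ^ (t + 1) ≤ C * (x ^ (t + 1) - x ^ t) := by gcongr
            have e2 : F * (x - 1) ^ (t + 1) * Real.logb 2 (x - 1) ≤
                F * (x - 1) ^ (t + 1) * l := by gcongr
            have e3 : F * (x - 1) ^ (t + 1) * l ≤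
                F * (x ^ (t + 1) - (t + 1) * x ^ t + K * (x ^ t / x)) * l := by gcongr
            have e4 : F * (K * (x ^ t / x) * l) ≤ 1 * (K * x ^ t) := by
              have : x ^ t / x * l ≤ x ^ t := by
                calc x ^ t / x * l ≤ x ^ t / x * x := by gcongr
                  _ = x ^ t := by field_simp
              have h2 : K * (x ^ t / x) * l ≤ K * x ^ t := by
                rw [mul_assoc]; gcongr
              exact mul_le_mul hF1 h2 (by positivity) (by norm_num)
            have e5 : (A + CO + 1) * 1 ≤ (A + CO + 1) * x ^ t := by gcongr
            have e6 : C * x ^ t = (A + CO + 1) * x ^ t + CE * x ^ t + K * x ^ t + x ^ t := by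
              rw [hC]; ring
            nlinarith

lemma growth (t : ℕ) : EB t ∧ OB t := by
  induction t with
  | zero => exact ⟨EB_zero, OB_zero⟩
  | succ t ih =>
    have hO := OB_succ t ih.1 ih.2
    exact ⟨EB_succ t ih.1 hO, hO⟩

lemma final_nat (k : ℕ) (hk : 1 ≤ k) : ∃ c : ℕ, 1 ≤ c ∧ ∀ n : ℕ, 1 ≤ n →
    pFull k n ≤ n * P (k - 1) (invAck n) * c ^ (invAck n) := by
  obtain ⟨c, hc, H⟩ := Bd.main (k + 1) (k - 1)
  rw [show k - 1 + 2 = k + 1 by omega] at H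
  refine ⟨(1 + 4 * 4 ^ (k + 1)) * c, Nat.mul_pos (by positivity) hc, fun n hn => ?_⟩
  obtain ⟨h1, h3⟩ := invAck_spec n
  obtain ⟨d, hd⟩ : ∃ d, invAck n = d + 1 := ⟨invAck n - 1, by omega⟩
  rw [hd] at h3 ⊢
  set L := Nat.clog 2 n with hL
  have hnL : n ≤ 2 ^ L := Nat.le_pow_clog (by norm_num) n
  have hL2 : 2 ^ L ≤ 2 * n := by
    by_cases h : n = 1
    · subst h; simp [hL]
    · have h2 := Nat.pow_pred_clog_lt_self (b := 2) (by norm_num) (x := n) (by omega)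
      have h4 : 0 < L := Nat.clog_pos (by norm_num) (by omega)
      obtain ⟨l, hl⟩ : ∃ l, L = l + 1 := ⟨L - 1, by omega⟩
      rw [← hL, hl] at h2
      simp only [Nat.pred_succ] at h2
      rw [hl, pow_succ]
      omega
  have hLn : L ≤ n := by
    rw [hL]
    exact Nat.clog_le_of_le_pow (Nat.lt_two_pow_self).le
  have hal : alphaHier (d + 1) L ≤ 3 := (alpha_mono d n L hLn).trans h3
  have hb := pFull_le k n _ _ hk ((H d L).rows hnL)
  set p := P (k - 1) (d + 1) with hp
  have hp1 : 1 ≤ p := P_pos _ _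
  have hN : c ^ (d + 1) * (1 + alphaHier (d + 1) L) ^ (k + 1) * 2 ^ L
      ≤ c ^ (d + 1) * 4 ^ (k + 1) * (2 * n) := by
    gcongr
    omega
  have hcd : 1 ≤ c ^ (d + 1) := Nat.one_le_pow _ _ hc
  calc pFull k n ≤ p * n + (p + 1) * (c ^ (d + 1) * (1 + alphaHier (d + 1) L) ^ (k + 1) * 2 ^ L) :=
        hb
    _ ≤ p * n * c ^ (d + 1) + (2 * p) * (c ^ (d + 1) * 4 ^ (k + 1) * (2 * n)) := by
        refine Nat.add_le_add (Nat.le_mul_of_pos_right _ hcd) (Nat.mul_le_mul (by omega) hN)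
    _ = n * p * ((1 + 4 * 4 ^ (k + 1)) ^ 1 * c ^ (d + 1)) := by ring
    _ ≤ n * p * ((1 + 4 * 4 ^ (k + 1)) ^ (d + 1) * c ^ (d + 1)) := by
        gcongr <;> omega
    _ = _ := by rw [mul_pow]

end PkProof

/-- For every fixed odd `k ≥ 5`, with `t = ⌊(k−2)/2⌋ = (k−3)/2`, there is a
constant `C_k` such that for every `n ≥ 1`,
`p_k(n) ≤ n·2^((1/t!)·α(n)^t·log₂ α(n) + C_k·α(n)^t)`. -/
theorem pk_odd_upper_bound :
    ∀ k : ℕ, 5 ≤ k → k % 2 = 1 → ∃ C : ℝ, ∀ n : ℕ, 1 ≤ n →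
      (pFull k n : ℝ) ≤ (n : ℝ) * (2 : ℝ) ^
        ((1 / (Nat.factorial ((k - 2) / 2) : ℝ)) * (invAck n : ℝ) ^ ((k - 2) / 2)
            * Real.logb 2 (invAck n)
          + C * (invAck n : ℝ) ^ ((k - 2) / 2)) := by
  intro k hk hodd
  obtain ⟨t, ht⟩ : ∃ t, k = 2 * t + 3 := ⟨(k - 3) / 2, by omega⟩
  have ht1 : 1 ≤ t := by omega
  have hkt : (k - 2) / 2 = t := by omega
  rw [hkt]
  obtain ⟨C, hC, hE⟩ := (PkProof.growth t).1
  obtain ⟨c, hc, hfin⟩ := PkProof.final_nat k (by omega)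
  refine ⟨C + c, fun n hn => ?_⟩
  have h1 := (PkProof.invAck_spec n).1
  have hf := hfin n hn
  have hE' := hE (invAck n) h1
  rw [show k - 1 = 2 * t + 2 by omega] at hf
  set d := invAck n with hd
  have hd1 : (1 : ℝ) ≤ (d : ℝ) := by exact_mod_cast h1
  have hf' : (pFull k n : ℝ) ≤ n * PkProof.P (2 * t + 2) d * (c : ℝ) ^ d := by
    exact_mod_cast hf
  have hcd : (c : ℝ) ^ d ≤ (2 : ℝ) ^ ((c : ℝ) * (d : ℝ) ^ t) := by
    calc (c : ℝ) ^ d ≤ ((2 : ℝ) ^ (c : ℝ)) ^ d :=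
          pow_le_pow_left₀ (by positivity) (PkProof.nat_le_two_rpow c) d
      _ = (2 : ℝ) ^ ((c : ℝ) * d) := by
          rw [← Real.rpow_natCast, ← Real.rpow_mul (by norm_num)]
      _ ≤ _ := by
          apply Real.rpow_le_rpow_of_exponent_le (by norm_num)
          gcongr
          exact le_self_pow₀ hd1 (by omega)
  refine hf'.trans ?_
  rw [add_mul, ← add_assoc, Real.rpow_add (by norm_num), ← mul_assoc]
  gcongr
end

section
/- There exists a constant C such that for every integer n ≥ 1 there is an n×n (0,1)-matrix that is not 4-full and has at least 2·n·α(n) − C·n 1-entries; in other words, p₃(n) ≥ 2·n·α(n) − C·n. -/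
namespace P3
/-! ## Fast growing functions -/

/-- `G k` is a lower inverse of `alphaHier (k+1)`. -/
def G : ℕ → ℕ → ℕ
  | 0, j => 2 * j - 1
  | _ + 1, 0 => 0
  | _ + 1, 1 => 2
  | k + 1, j + 2 => G k (G (k + 1) (j + 1))

lemma G_iter (k : ℕ) (f : ℕ → ℕ) (hf : ∀ n j, j ≤ f n → G k j ≤ n) :
    ∀ fuel m j, j ≤ iterCount f fuel m → G (k + 1) j ≤ m := by
  intro fuel
  induction fuel with
  | zero =>
    intro m j hj
    simp only [iterCount, Nat.le_zero] at hj
    subst hj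
    simp [G]
  | succ fuel ih =>
    intro m j hj
    rw [iterCount] at hj
    split_ifs at hj with h
    · simp only [Nat.le_zero] at hj
      subst hj
      simp [G]
    · match j, hj with
      | 0, _ => simp [G]
      | 1, _ => simp only [G]; omega
      | j + 2, hj =>
        rw [G]
        apply hf
        apply ih
        omega

lemma G_alpha (k : ℕ) : ∀ n j, j ≤ alphaHier (k + 1) n → G k j ≤ n := by
  induction k with
  | zero => intro n j hj; simp only [alphaHier] at hj; simp only [G]; omega
  | succ k ih =>
    intro n j hj
    rw [alphaHier] at hj
    exact G_iter k _ ih _ _ _ hj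

lemma G_one (j : ℕ) : G 1 (j + 1) = 2 ^ j + 1 := by
  induction j with
  | zero => simp [G]
  | succ j ih => rw [G, ih, G, pow_succ]; omega

lemma G_gt (k : ℕ) : ∀ x, 1 ≤ x → x + 1 ≤ G (k + 1) x := by
  induction k with
  | zero =>
    intro x hx
    obtain ⟨x, rfl⟩ : ∃ y, x = y + 1 := ⟨x - 1, by omega⟩
    rw [G_one]
    have := @Nat.lt_two_pow_self x
    omega
  | succ k ih =>
    intro x hx
    induction x, hx using Nat.le_induction with
    | base => simp [G]
    | succ x hx ihx =>
      obtain ⟨x, rfl⟩ : ∃ y, x = y + 1 := ⟨x - 1, by omega⟩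
      rw [G]
      have := ih (G (k + 1 + 1) (x + 1)) (by omega)
      omega

lemma G_strictMono (k : ℕ) : StrictMono (G (k + 1)) := by
  apply strictMono_nat_of_lt_succ
  intro x
  match x with
  | 0 => simp [G]
  | x + 1 =>
    match k with
    | 0 => rw [G_one, G_one, pow_succ]; have := Nat.two_pow_pos x; omega
    | k + 1 =>
      rw [G]
      have h1 := G_gt (k + 1) (x + 1) (by omega)
      have := G_gt k (G (k + 1 + 1) (x + 1)) (by omega)
      omega

lemma sq_le_two_pow (n : ℕ) : (n + 7) ^ 2 ≤ 2 ^ (n + 6) := by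
  induction n with
  | zero => norm_num
  | succ n ih =>
    rw [show n + 1 + 6 = (n + 6) + 1 by ring, pow_succ 2]
    have : (n + 1 + 7) ^ 2 ≤ (n + 7) ^ 2 * 2 := by
      have : (n + 7) ^ 2 * 2 = (n + 1 + 7) ^ 2 + (n ^ 2 + 12 * n + 34) := by ring
      omega
    omega

lemma G_sq (k : ℕ) : ∀ y, 7 ≤ y → y ^ 2 ≤ G (k + 1) y := by
  induction k with
  | zero =>
    intro y hy
    obtain ⟨x, rfl⟩ : ∃ z, y = z + 6 + 1 := ⟨y - 7, by omega⟩
    rw [G_one]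
    have := sq_le_two_pow x
    rw [show x + 6 + 1 = x + 7 by ring]
    omega
  | succ k ih =>
    intro y hy
    obtain ⟨x, rfl⟩ : ∃ z, y = z + 2 := ⟨y - 2, by omega⟩
    rw [G]
    have h1 := G_gt (k + 1) (x + 1) (by omega)
    have h2 := ih _ (show 7 ≤ G (k + 1 + 1) (x + 1) by omega)
    exact le_trans (Nat.pow_le_pow_left (by omega) 2) h2

lemma G_mul (k x : ℕ) (hx : 6 ≤ x) : x * G (k + 2) x ≤ G (k + 2) (x + 1) := by
  obtain ⟨x, rfl⟩ : ∃ z, x = z + 1 := ⟨x - 1, by omega⟩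
  have h1 : x + 1 + 1 ≤ G (k + 2) (x + 1) := G_gt (k + 1) (x + 1) (by omega)
  have h2 := G_sq k (G (k + 2) (x + 1)) (by omega)
  rw [show x + 1 + 1 = x + 2 by rfl, G]
  nlinarith

lemma G_three (k : ℕ) : G (k + 1) 3 = 5 ∧ G (k + 1) 2 = 3 := by
  induction k with
  | zero => exact ⟨G_one 2, G_one 1⟩
  | succ k ih =>
    have h2 : G (k + 1 + 1) 2 = 3 := by
      rw [show (2 : ℕ) = 0 + 2 by rfl, G, show G (k + 1 + 1) (0 + 1) = 2 by simp [G]]; exact ih.2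
    refine ⟨?_, h2⟩
    rw [show (3 : ℕ) = 1 + 2 by rfl, G, h2]; exact ih.1

lemma G_four (k : ℕ) : G (k + 2) 4 = G (k + 1) 5 := by
  rw [show (4 : ℕ) = 2 + 2 by rfl, G, (G_three (k + 1)).1]

lemma G_five (k : ℕ) : G (k + 2) 5 = G (k + 1) (G (k + 2) 4) := by
  rw [show (5 : ℕ) = 3 + 2 by rfl, G]

lemma G_two_four : G 2 4 = 17 := by
  rw [G_four 0]; exact G_one 4

lemma G_two_five : 289 ≤ G 2 5 := by
  rw [G_five 0, G_two_four]; exact G_sq 0 17 (by norm_num)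

lemma G_pow (d : ℕ) : 2 ^ (d + 7) ≤ G (d + 3) 4 := by
  induction d with
  | zero => rw [G_four 1]; have := G_two_five; norm_num; omega
  | succ d ih =>
    rw [show d + 1 + 3 = (d + 2) + 2 by ring, G_four, G_five (d + 1)]
    have h0 : 2 ^ (d + 7) ≥ 2 ^ 7 := Nat.pow_le_pow_right (by norm_num) (by omega)
    have := G_sq (d + 1) (G (d + 3) 4) (by omega)
    rw [show d + 1 + 7 = (d + 7) + 1 by ring, pow_succ]
    refine le_trans ?_ this
    nlinarith

/-- Size bound for the construction. -/
def w : ℕ → ℕ → ℕ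
  | 0, s => s + 1
  | _ + 1, 0 => 1
  | d + 1, s + 1 => w d (2 * w (d + 1) s) * w (d + 1) s

lemma w_pos (d : ℕ) : ∀ s, 1 ≤ w d s := by
  induction d with
  | zero => intro s; simp [w]
  | succ d ih =>
    intro s
    induction s with
    | zero => simp [w]
    | succ s ihs => rw [w]; exact Nat.mul_pos (ih _) ihs

lemma w_mono (d : ℕ) : Monotone (w d) := by
  apply monotone_nat_of_le_succ
  intro s
  cases d with
  | zero => simp [w]
  | succ d => rw [w]; exact Nat.le_mul_of_pos_left _ (w_pos _ _)

lemma w_le_G (d : ℕ) : ∀ s, 2 * w d s + 6 ≤ G (d + 2) (s + 5) := by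
  induction d with
  | zero =>
    intro s
    have h5 := G_two_five
    have h6 : G 2 5 < G 2 6 := G_strictMono 1 (by norm_num)
    match s with
    | 0 => simp only [w]; norm_num; omega
    | 1 => simp only [w]; norm_num; omega
    | s + 2 =>
      have := G_sq 1 (s + 2 + 5) (by omega)
      simp only [w]
      refine le_trans ?_ this
      nlinarith
  | succ d ih =>
    intro s
    induction s with
    | zero =>
      simp only [w]
      have := G_gt (d + 2) 5 (by omega)
      have h6 := G_strictMono (d + 2) (show 4 < 5 by norm_num)
      have := G_pow d
      have h0 : 2 ^ (d + 7) ≥ 2 ^ 7 := Nat.pow_le_pow_right (by norm_num) (by omega)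
      rw [show d + 2 + 1 = d + 3 by ring] at *
      rw [show d + 1 + 2 = d + 3 by ring]
      norm_num
      omega
    | succ s ihs =>
      rw [w]
      set u := w (d + 1) s with hu
      have hu1 : 1 ≤ u := w_pos _ _
      have h1 := ih (2 * u)
      have h2 := G_mul d (2 * u + 5) (by omega)
      have h3 : G (d + 2) (2 * u + 5 + 1) ≤ G (d + 2) (G (d + 3) (s + 5)) :=
        (G_strictMono (d + 1)).monotone ihs
      have h4 : G (d + 3) (s + 1 + 5) = G (d + 2) (G (d + 3) (s + 5)) := by
        rw [show s + 1 + 5 = (s + 4) + 2 by ring, G]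
      rw [show d + 1 + 2 = d + 3 by ring, h4]
      refine le_trans ?_ h3
      refine le_trans ?_ h2
      nlinarith

lemma final_size (d : ℕ) :
    w d (2 ^ (d + 3)) * 2 ^ (d + 2) * (d + 1) ≤ G (d + 4) 4 := by
  have h1 := w_le_G d (2 ^ (d + 3))
  set X := 2 ^ (d + 3) + 5 with hX
  have h8 : 2 ^ (d + 3) ≥ 2 ^ 3 := Nat.pow_le_pow_right (by norm_num) (by omega)
  have e1 : 2 ^ (d + 2) ≤ X := by rw [hX, pow_succ 2 (d + 2)]; omega
  have e2 : d + 1 ≤ X + 1 := by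
    have := @Nat.lt_two_pow_self (d + 3)
    omega
  have m1 := G_mul d X (by omega)
  have m2 := G_mul d (X + 1) (by omega)
  have p := G_pow d
  have e3 : X + 2 ≤ G (d + 3) 4 := by
    refine le_trans ?_ p
    rw [hX, show d + 7 = (d + 3) + 4 by ring, pow_add 2 (d + 3) 4]; omega
  have e4 : G (d + 2) (X + 2) ≤ G (d + 4) 4 := by
    rw [G_four (d + 2), G_five (d + 1)]
    exact (G_strictMono (d + 1)).monotone e3
  refine le_trans ?_ e4
  calc w d (2 ^ (d + 3)) * 2 ^ (d + 2) * (d + 1) ≤ G (d + 2) X * X * (X + 1) := by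
        gcongr; omega
    _ = (X + 1) * (X * G (d + 2) X) := by ring
    _ ≤ (X + 1) * G (d + 2) (X + 1) := by gcongr
    _ ≤ _ := m2

lemma size_le_of_invAck (d n : ℕ) (h : d + 6 ≤ invAck n) :
    w d (2 ^ (d + 3)) * 2 ^ (d + 2) * (d + 1) ≤ n := by
  refine le_trans (final_size d) ?_
  apply G_alpha
  have := Nat.notMem_of_lt_sInf (s := {k : ℕ | 1 ≤ k ∧ alphaHier k n ≤ 3}) (m := d + 5)
    (by unfold invAck at h; omega)
  simp only [Set.mem_ofPred_eq, not_and, not_le] at this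
  exact this (by omega)
/-! ## The construction -/

/-- The combinatorial structure maintained by the recursive construction: a 0-1 matrix `M`
with distinguished rows `fi` (holding first occurrences) and `la` (holding last occurrences). -/
structure Zs {R C : Type} [LinearOrder R] [LinearOrder C]
    (M : R → C → Prop) (fi la : R → Prop) (m1 m2 μ : ℕ) : Prop where
  avoid : ∀ x y r1 r2 r3 r4, x < y → r1 < r2 → r2 < r3 → r3 < r4 →
    M r1 y → M r2 x → M r3 y → M r4 x → False
  disj : ∀ r, fi r → la r → False
  fi_first : ∀ r c r', fi r → M r c → M r' c → r ≤ r'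
  la_last : ∀ r c r', la r → M r c → M r' c → r' ≤ r
  fi_card : ∀ r, fi r → Nat.card {c // M r c} = m1
  la_card : ∀ r, la r → Nat.card {c // M r c} = m2
  col_fi : ∀ c, ∃ r, fi r ∧ M r c
  col_la : ∀ c, ∃ r, la r ∧ M r c
  rest_fi : ∀ r x y, fi r → x < y → M r x → M r y →
    ∀ r1 r2, r < r1 → r1 ≤ r2 → M r1 y → M r2 x → False
  rest_la : ∀ r x y, la r → x < y → M r x → M r y →
    ∀ r1 r2, r1 ≤ r2 → r2 < r → M r1 y → M r2 x → False
  mult : ∀ c, μ ≤ Nat.card {r // M r c}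

/-- Rows of the composed matrix. -/
inductive NRow (Rs R1 R2 : Type) (fi la : Rs → Prop) : Type
  | star (r : Rs)
  | fst (p : Rs) (hp : fi p) (i : R1)
  | lst (q : Rs) (hq : la q) (i : R2)

/-- Columns of the composed matrix. -/
inductive NCol (Rs C1 Cs C2 : Type) (fi la : Rs → Prop) : Type
  | fst (p : Rs) (hp : fi p) (i : C1)
  | star (c : Cs)
  | lst (q : Rs) (hq : la q) (i : C2)

section order
set_option linter.unusedSectionVars false
variable {Rs R1 R2 C1 Cs C2 : Type} {fi la : Rs → Prop}
  [LinearOrder Rs] [LinearOrder R1] [LinearOrder R2] [LinearOrder C1] [LinearOrder Cs]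
  [LinearOrder C2]

/-- Sorting key for rows. -/
def NRow.key : NRow Rs R1 R2 fi la → Rs ×ₗ (R1 ⊕ₗ (Unit ⊕ₗ R2))
  | .star r => toLex (r, Sum.inrₗ (Sum.inlₗ ()))
  | .fst p _ i => toLex (p, Sum.inlₗ i)
  | .lst q _ i => toLex (q, Sum.inrₗ (Sum.inrₗ i))

/-- Sorting key for columns. -/
def NCol.key : NCol Rs C1 Cs C2 fi la → (Rs ×ₗ C1) ⊕ₗ (Cs ⊕ₗ (Rs ×ₗ C2))
  | .fst p _ i => Sum.inlₗ (toLex (p, i))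
  | .star c => Sum.inrₗ (Sum.inlₗ c)
  | .lst q _ i => Sum.inrₗ (Sum.inrₗ (toLex (q, i)))

lemma NRow.key_inj : Function.Injective (NRow.key (Rs := Rs) (R1 := R1) (R2 := R2) (fi := fi) (la := la)) := by
  intro a b h
  cases a <;> cases b <;> simp [NRow.key, Sum.inlₗ, Sum.inrₗ] at h ⊢ <;> exact h

lemma NCol.key_inj : Function.Injective (NCol.key (Rs := Rs) (C1 := C1) (Cs := Cs) (C2 := C2) (fi := fi) (la := la)) := by
  intro a b h
  cases a <;> cases b <;> simp [NCol.key, Sum.inlₗ, Sum.inrₗ] at h ⊢ <;> exact h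

noncomputable instance : LinearOrder (NRow Rs R1 R2 fi la) :=
  LinearOrder.lift' NRow.key NRow.key_inj

noncomputable instance : LinearOrder (NCol Rs C1 Cs C2 fi la) :=
  LinearOrder.lift' NCol.key NCol.key_inj

lemma NRow.lt_def (a b : NRow Rs R1 R2 fi la) : a < b ↔ a.key < b.key := Iff.rfl
lemma NRow.le_def (a b : NRow Rs R1 R2 fi la) : a ≤ b ↔ a.key ≤ b.key := Iff.rfl
lemma NCol.lt_def (a b : NCol Rs C1 Cs C2 fi la) : a < b ↔ a.key < b.key := Iff.rfl

/-- Row order. -/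
def NRow.ltB : NRow Rs R1 R2 fi la → NRow Rs R1 R2 fi la → Prop
  | .star a, .star b => a < b
  | .star a, .fst p _ _ => a < p
  | .star a, .lst q _ _ => a ≤ q
  | .fst p _ _, .star b => p ≤ b
  | .fst p _ i, .fst p' _ i' => p < p' ∨ p = p' ∧ i < i'
  | .fst p _ _, .lst q _ _ => p ≤ q
  | .lst q _ _, .star b => q < b
  | .lst q _ _, .fst p _ _ => q < p
  | .lst q _ i, .lst q' _ i' => q < q' ∨ q = q' ∧ i < i'

lemma NRow.lt_iff (a b : NRow Rs R1 R2 fi la) : a < b ↔ a.ltB b := by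
  rw [NRow.lt_def]
  cases a <;> cases b <;>
    simp [NRow.key, NRow.ltB, Prod.Lex.lt_iff, Sum.inlₗ, Sum.inrₗ, le_iff_lt_or_eq]

/-- Column order. -/
def NCol.ltB : NCol Rs C1 Cs C2 fi la → NCol Rs C1 Cs C2 fi la → Prop
  | .star a, .star b => a < b
  | .star _, .fst _ _ _ => False
  | .star _, .lst _ _ _ => True
  | .fst _ _ _, .star _ => True
  | .fst p _ i, .fst p' _ i' => p < p' ∨ p = p' ∧ i < i'
  | .fst _ _ _, .lst _ _ _ => True
  | .lst _ _ _, .star _ => False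
  | .lst _ _ _, .fst _ _ _ => False
  | .lst q _ i, .lst q' _ i' => q < q' ∨ q = q' ∧ i < i'

lemma NCol.lt_iff (a b : NCol Rs C1 Cs C2 fi la) : a < b ↔ a.ltB b := by
  rw [NCol.lt_def]
  cases a <;> cases b <;>
    simp [NCol.key, NCol.ltB, Prod.Lex.lt_iff, Sum.inlₗ, Sum.inrₗ]

end order

/-- Underlying sum type of the rows. -/
def NRow.equiv (Rs R1 R2 : Type) (fi la : Rs → Prop) :
    NRow Rs R1 R2 fi la ≃ Rs ⊕ ({r // fi r} × R1) ⊕ ({r // la r} × R2) where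
  toFun
    | .star r => .inl r
    | .fst p hp i => .inr (.inl (⟨p, hp⟩, i))
    | .lst p hp i => .inr (.inr (⟨p, hp⟩, i))
  invFun
    | .inl r => .star r
    | .inr (.inl (p, i)) => .fst p.1 p.2 i
    | .inr (.inr (p, i)) => .lst p.1 p.2 i
  left_inv a := by cases a <;> rfl
  right_inv a := by rcases a with a | a | a <;> rfl

/-- Underlying sum type of the columns. -/
def NCol.equiv (Rs C1 Cs C2 : Type) (fi la : Rs → Prop) :
    NCol Rs C1 Cs C2 fi la ≃ Cs ⊕ ({r // fi r} × C1) ⊕ ({r // la r} × C2) where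
  toFun
    | .star r => .inl r
    | .fst p hp i => .inr (.inl (⟨p, hp⟩, i))
    | .lst p hp i => .inr (.inr (⟨p, hp⟩, i))
  invFun
    | .inl r => .star r
    | .inr (.inl (p, i)) => .fst p.1 p.2 i
    | .inr (.inr (p, i)) => .lst p.1 p.2 i
  left_inv a := by cases a <;> rfl
  right_inv a := by rcases a with a | a | a <;> rfl

/-- The composed matrix. `S p y i` says that `y` is inserted into row `i` of the copy at `p`. -/
def NMat {Rs R1 R2 C1 Cs C2 : Type} {fi la : Rs → Prop}
    (Ms : Rs → Cs → Prop) (M1 : R1 → C1 → Prop) (M2 : R2 → C2 → Prop)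
    (S : Rs → Cs → R1 → Prop) (T : Rs → Cs → R2 → Prop) :
    NRow Rs R1 R2 fi la → NCol Rs C1 Cs C2 fi la → Prop
  | .star r, .star c => Ms r c
  | .star _, .fst _ _ _ => False
  | .star _, .lst _ _ _ => False
  | .fst p _ i, .fst p' _ x => p = p' ∧ M1 i x
  | .fst p _ i, .star y => S p y i
  | .fst _ _ _, .lst _ _ _ => False
  | .lst _ _ _, .fst _ _ _ => False
  | .lst q _ i, .star y => T q y i
  | .lst q _ i, .lst q' _ x => q = q' ∧ M2 i x

/-- Distinguished rows of the composed matrix. -/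
def NSp {Rs R1 R2 : Type} {fi la : Rs → Prop} (s1 : R1 → Prop) (s2 : R2 → Prop) :
    NRow Rs R1 R2 fi la → Prop
  | .star _ => False
  | .fst _ _ i => s1 i
  | .lst _ _ i => s2 i

/-- Compatibility of the insertion relation at a distinguished row. -/
structure Ins {Rs R1 Cs : Type} [LinearOrder Rs] [LinearOrder R1] [LinearOrder Cs]
    (Ms : Rs → Cs → Prop) (sp : Rs → Prop) (sp1 : R1 → Prop) (S : Rs → Cs → R1 → Prop) :
    Prop where
  mem : ∀ p y i, S p y i → Ms p y
  tgt : ∀ p y i, S p y i → sp1 i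
  fn : ∀ p y i j, S p y i → S p y j → i = j
  ex : ∀ p y, sp p → Ms p y → ∃ i, S p y i
  ex' : ∀ p i, sp p → sp1 i → ∃ y, S p y i
  inj : ∀ p x y i, S p x i → S p y i → x = y
  mono : ∀ p x y i j, S p x i → S p y j → x < y → i < j

lemma exists_ins {Rs R1 Cs : Type} [LinearOrder Rs] [LinearOrder R1] [LinearOrder Cs]
    [Finite R1] [Finite Cs]
    (Ms : Rs → Cs → Prop) (sp : Rs → Prop) (sp1 : R1 → Prop)
    (h : ∀ r, sp r → Nat.card {c // Ms r c} = Nat.card {i // sp1 i}) :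
    ∃ S, Ins Ms sp sp1 S := by
  classical
  have := Fintype.ofFinite R1
  have := Fintype.ofFinite Cs
  have key : ∀ r, sp r → Nonempty ({c // Ms r c} ≃o {i // sp1 i}) := by
    intro r hr
    have h1 := Fintype.orderIsoFinOfCardEq {c // Ms r c} (Nat.card_eq_fintype_card.symm.trans (h r hr))
    have h2 := Fintype.orderIsoFinOfCardEq {i // sp1 i} (Nat.card_eq_fintype_card.symm)
    exact ⟨h1.symm.trans h2⟩
  have σ : ∀ r, sp r → ({c // Ms r c} ≃o {i // sp1 i}) := fun r hr => (key r hr).some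
  refine ⟨fun p y i => ∃ (hp : sp p) (hy : Ms p y), (σ p hp ⟨y, hy⟩).1 = i, ?_⟩
  constructor
  · rintro p y i ⟨_, h, _⟩; exact h
  · rintro p y i ⟨hp, hy, rfl⟩; exact (σ p hp ⟨y, hy⟩).2
  · rintro p y i j ⟨_, _, rfl⟩ ⟨_, _, rfl⟩; rfl
  · intro p y hp hy; exact ⟨_, hp, hy, rfl⟩
  · intro p i hp hi
    refine ⟨((σ p hp).symm ⟨i, hi⟩).1, hp, ((σ p hp).symm ⟨i, hi⟩).2, ?_⟩
    simp
  · rintro p x y i ⟨hp, hx, h1⟩ ⟨_, hy, h2⟩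
    have := (σ p hp).injective (Subtype.ext (h1.trans h2.symm))
    simpa using this
  · rintro p x y i j ⟨hp, hx, rfl⟩ ⟨_, hy, rfl⟩ hxy
    have : σ p hp ⟨x, hx⟩ < σ p hp ⟨y, hy⟩ := (σ p hp).strictMono hxy
    exact this

section compose
set_option linter.unusedSectionVars false
variable {Rs R1 R2 C1 Cs C2 : Type} {fi la : Rs → Prop}
  [LinearOrder Rs] [LinearOrder R1] [LinearOrder R2] [LinearOrder C1] [LinearOrder Cs]
  [LinearOrder C2]
  {Ms : Rs → Cs → Prop} {M1 : R1 → C1 → Prop} {M2 : R2 → C2 → Prop}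
  {fi1 la1 : R1 → Prop} {fi2 la2 : R2 → Prop}
  {S : Rs → Cs → R1 → Prop} {T : Rs → Cs → R2 → Prop} {a b m1 m2 μ0 μ : ℕ}

/-- The row of the outer matrix to which a row of the composed matrix belongs. -/
def NRow.proj : NRow Rs R1 R2 fi la → Rs
  | .star r => r
  | .fst p _ _ => p
  | .lst q _ _ => q

lemma NRow.proj_mono {r r' : NRow Rs R1 R2 fi la} (h : r < r') : r.proj ≤ r'.proj := by
  rw [NRow.lt_iff] at h
  cases r <;> cases r' <;> simp only [NRow.ltB, NRow.proj] at * <;> grind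

lemma NMat_star (hS : Ins Ms fi fi1 S) (hT : Ins Ms la la2 T)
    (r : NRow Rs R1 R2 fi la) (c : Cs)
    (h : NMat (C1 := C1) (C2 := C2) Ms M1 M2 S T r (.star c)) : Ms r.proj c := by
  cases r with
  | star r => exact h
  | fst p hp i => exact hS.mem _ _ _ h
  | lst q hq i => exact hT.mem _ _ _ h

lemma comp_eq (hs : Zs Ms fi la a b μ0)
    (hS : Ins Ms fi fi1 S) (hT : Ins Ms la la2 T)
    (x y : Cs) (hxy : x < y) (r r' : NRow Rs R1 R2 fi la) (hr : r < r')
    (he : r.proj = r'.proj) (h1 : NMat (C1 := C1) (C2 := C2) Ms M1 M2 S T r (.star y))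
    (h2 : NMat (C1 := C1) (C2 := C2) Ms M1 M2 S T r' (.star x)) :
    (fi r.proj ∧ r' = .star r.proj) ∨ (la r.proj ∧ r = .star r.proj) := by
  have hd := hs.disj
  have mS := hS.mono
  have mT := hT.mono
  rw [NRow.lt_iff] at hr
  cases r <;> cases r' <;> simp only [NRow.ltB, NRow.proj, NMat] at * <;> grind

lemma comp_eq' (r r' : NRow Rs R1 R2 fi la) (hr : r < r')
    (he : r.proj = r'.proj) : fi r.proj ∨ la r.proj := by
  rw [NRow.lt_iff] at hr
  cases r <;> cases r' <;> simp only [NRow.ltB, NRow.proj] at * <;> grind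

lemma NRow.star_lt (ρ : Rs) (r : NRow Rs R1 R2 fi la) (h : NRow.star ρ < r) :
    ρ < r.proj ∨ la ρ := by
  rw [NRow.lt_iff] at h
  cases r <;> simp only [NRow.ltB, NRow.proj] at * <;> grind

lemma NRow.lt_star (ρ : Rs) (r : NRow Rs R1 R2 fi la) (h : r < NRow.star ρ) :
    r.proj < ρ ∨ fi ρ := by
  rw [NRow.lt_iff] at h
  cases r <;> simp only [NRow.ltB, NRow.proj] at * <;> grind

lemma comp_avoid_star (hs : Zs Ms fi la a b μ0)
    (hS : Ins Ms fi fi1 S) (hT : Ins Ms la la2 T)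
    (x y : Cs) (hxy : x < y) (r1 r2 r3 r4 : NRow Rs R1 R2 fi la)
    (h12 : r1 < r2) (h23 : r2 < r3) (h34 : r3 < r4)
    (h1 : NMat (C1 := C1) (C2 := C2) Ms M1 M2 S T r1 (.star y))
    (h2 : NMat (C1 := C1) (C2 := C2) Ms M1 M2 S T r2 (.star x))
    (h3 : NMat (C1 := C1) (C2 := C2) Ms M1 M2 S T r3 (.star y))
    (h4 : NMat (C1 := C1) (C2 := C2) Ms M1 M2 S T r4 (.star x)) : False := by
  have p12 := NRow.proj_mono h12
  have p23 := NRow.proj_mono h23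
  have p34 := NRow.proj_mono h34
  have s1 := NMat_star hS hT _ _ h1
  have s2 := NMat_star hS hT _ _ h2
  have s3 := NMat_star hS hT _ _ h3
  have s4 := NMat_star hS hT _ _ h4
  -- a distinguished row where two consecutive rows meet
  have main : ∀ ρ, (fi ρ ∧ r2.proj ≤ ρ ∨ la ρ ∧ ρ ≤ r3.proj) → Ms ρ x → Ms ρ y → False := by
    rintro ρ (⟨hρ, hle⟩ | ⟨hρ, hle⟩) hx hy
    · have f1 := hs.fi_first ρ y _ hρ hy s1
      have e2 : r2.proj = ρ := le_antisymm hle (f1.trans p12)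
      have e1 : r1.proj = ρ := le_antisymm (p12.trans hle) f1
      have hnla : ¬ la ρ := fun h => hs.disj _ hρ h
      rcases comp_eq hs hS hT x y hxy r1 r2 h12 (e1.trans e2.symm) h1 h2 with ⟨_, h⟩ | ⟨h, _⟩
      · rw [h, e1] at h23
        have := (NRow.star_lt _ _ h23).resolve_right hnla
        exact hs.rest_fi ρ x y hρ hxy hx hy _ _ this p34 s3 s4
      · rw [e1] at h; exact hnla h
    · have f1 := hs.la_last ρ x _ hρ hx s4
      have e3 : r3.proj = ρ := le_antisymm (p34.trans f1) hle
      have e4 : r4.proj = ρ := le_antisymm f1 (hle.trans p34)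
      have hnfi : ¬ fi ρ := fun h => hs.disj _ h hρ
      rcases comp_eq hs hS hT x y hxy r3 r4 h34 (e3.trans e4.symm) h3 h4 with ⟨h, _⟩ | ⟨_, h⟩
      · rw [e3] at h; exact hnfi h
      · rw [h, e3] at h23
        have := (NRow.lt_star _ _ h23).resolve_right hnfi
        exact hs.rest_la ρ x y hρ hxy hx hy _ _ p12 this s1 s2
  rcases p12.lt_or_eq with q12 | q12
  · rcases p23.lt_or_eq with q23 | q23
    · rcases p34.lt_or_eq with q34 | q34
      · exact hs.avoid x y _ _ _ _ hxy q12 q23 q34 s1 s2 s3 s4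
      · refine main r3.proj ?_ (q34 ▸ s4) s3
        rcases comp_eq' _ _ h34 q34 with h | h
        · exact Or.inl ⟨h, p23⟩
        · exact Or.inr ⟨h, le_rfl⟩
    · refine main r2.proj ?_ s2 (q23 ▸ s3)
      rcases comp_eq' _ _ h23 q23 with h | h
      · exact Or.inl ⟨h, le_rfl⟩
      · exact Or.inr ⟨h, p23⟩
  · refine main r1.proj ?_ (q12 ▸ s2) s1
    rcases comp_eq' _ _ h12 q12 with h | h
    · exact Or.inl ⟨h, q12.ge⟩
    · exact Or.inr ⟨h, p12.trans p23⟩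

lemma comp_avoid (hs : Zs Ms fi la a b μ0)
    (hz1 : Zs M1 fi1 la1 m1 (m2 + 1) μ) (hz2 : Zs M2 fi2 la2 (m1 + 1) m2 μ)
    (hS : Ins Ms fi fi1 S) (hT : Ins Ms la la2 T)
    (x y : NCol Rs C1 Cs C2 fi la) (r1 r2 r3 r4 : NRow Rs R1 R2 fi la) (hxy : x < y)
    (h12 : r1 < r2) (h23 : r2 < r3) (h34 : r3 < r4)
    (h1 : NMat Ms M1 M2 S T r1 y)
    (h2 : NMat Ms M1 M2 S T r2 x)
    (h3 : NMat Ms M1 M2 S T r3 y)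
    (h4 : NMat Ms M1 M2 S T r4 x) : False := by
  rw [NCol.lt_iff] at hxy
  have a1 := hz1.avoid
  have a2 := hz2.avoid
  have b1 := hS.mem
  have b2 := hT.mem
  have c1 := hS.fn
  have c2 := hT.fn
  have d1 := hs.fi_first
  have d2 := hs.la_last
  cases x with
  | fst p hp x =>
    cases y with
    | fst p' hp' y =>
      rw [NRow.lt_iff] at h12 h23 h34
      cases r1 <;> simp only [NMat] at h1
      cases r2 <;> simp only [NMat] at h2
      cases r3 <;> simp only [NMat] at h3
      cases r4 <;> simp only [NMat] at h4
      simp only [NCol.ltB, NRow.ltB] at *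
      grind
    | star y =>
      rw [NRow.lt_iff] at h12 h23 h34
      cases r2 <;> simp only [NMat] at h2
      cases r4 <;> simp only [NMat] at h4
      cases r1 <;> simp only [NMat] at h1 <;>
      cases r3 <;> simp only [NMat] at h3 <;>
      simp only [NCol.ltB, NRow.ltB] at * <;> grind
    | lst q hq y =>
      rw [NRow.lt_iff] at h12 h23 h34
      cases r1 <;> simp only [NMat] at h1
      cases r2 <;> simp only [NMat] at h2
      cases r3 <;> simp only [NMat] at h3
      cases r4 <;> simp only [NMat] at h4
      simp only [NCol.ltB, NRow.ltB] at *
      grind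
  | star x =>
    cases y with
    | fst p' hp' y => simp only [NCol.ltB] at hxy
    | star y =>
      exact comp_avoid_star hs hS hT x y hxy _ _ _ _ h12 h23 h34 h1 h2 h3 h4
    | lst q hq y =>
      rw [NRow.lt_iff] at h12 h23 h34
      cases r1 <;> simp only [NMat] at h1
      cases r3 <;> simp only [NMat] at h3
      cases r2 <;> simp only [NMat] at h2 <;>
      cases r4 <;> simp only [NMat] at h4 <;>
      simp only [NCol.ltB, NRow.ltB] at * <;> grind
  | lst q hq x =>
    cases y with
    | fst p' hp' y => simp only [NCol.ltB] at hxy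
    | star y => simp only [NCol.ltB] at hxy
    | lst p' hp' y =>
      rw [NRow.lt_iff] at h12 h23 h34
      cases r1 <;> simp only [NMat] at h1
      cases r2 <;> simp only [NMat] at h2
      cases r3 <;> simp only [NMat] at h3
      cases r4 <;> simp only [NMat] at h4
      simp only [NCol.ltB, NRow.ltB] at *
      grind

lemma comp_zs [Finite Rs] [Finite R1] [Finite R2] [Finite C1] [Finite Cs] [Finite C2]
    (hs : Zs Ms fi la a b μ0)
    (hz1 : Zs M1 fi1 la1 m1 (m2 + 1) μ) (hz2 : Zs M2 fi2 la2 (m1 + 1) m2 μ)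
    (hS : Ins Ms fi fi1 S) (hT : Ins Ms la la2 T) (hμ : μ ≤ μ0 + 2) :
    Zs (R := NRow Rs R1 R2 fi la) (C := NCol Rs C1 Cs C2 fi la)
      (NMat Ms M1 M2 S T) (NSp fi1 fi2) (NSp la1 la2) (m1 + 1) (m2 + 1) μ where
  avoid := comp_avoid hs hz1 hz2 hS hT
  disj := by
    have := hz1.disj
    have := hz2.disj
    intro r
    cases r <;> simp only [NSp] <;> grind
  fi_first := by
    have a1 := hz1.fi_first
    have a2 := hz2.fi_first
    have b1 := hS.mem
    have b2 := hT.mem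
    have c1 := hS.fn
    have t2 := hT.tgt
    have d2 := hz2.disj
    have d1 := hs.fi_first
    intro r c r' hr h h'
    by_contra hlt
    rw [not_le, NRow.lt_iff] at hlt
    cases r <;> simp only [NSp] at hr <;> cases c <;> simp only [NMat] at h <;> 
      cases r' <;> simp only [NMat, NRow.ltB] at h' hlt <;> grind
  la_last := by
    have a1 := hz1.la_last
    have a2 := hz2.la_last
    have b1 := hS.mem
    have b2 := hT.mem
    have c1 := hT.fn
    have t2 := hS.tgt
    have d2 := hz1.disj
    have d1 := hs.la_last
    intro r c r' hr h h'
    by_contra hlt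
    rw [not_le, NRow.lt_iff] at hlt
    cases r <;> simp only [NSp] at hr <;> cases c <;> simp only [NMat] at h <;> 
      cases r' <;> simp only [NMat, NRow.ltB] at h' hlt <;> grind
  fi_card := by
    intro r hr
    cases r with
    | star r => exact hr.elim
    | fst p hp i =>
      obtain ⟨y, hy⟩ := hS.ex' p i hp hr
      rw [← hz1.fi_card i hr, ← Finite.card_option]
      symm
      refine Nat.card_eq_of_bijective (β := {c : NCol Rs C1 Cs C2 fi la //
        NMat (la := la) Ms M1 M2 S T (.fst p hp i) c})
        (fun o => match o with
          | none => ⟨.star y, hy⟩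
          | some x => ⟨.fst p hp x.1, rfl, x.2⟩) ⟨?_, ?_⟩
      · rintro (_ | ⟨r, hr⟩) (_ | ⟨r', hr'⟩) h <;> have h := congrArg Subtype.val h <;> simp at h ⊢
        exact h
      · rintro ⟨c | c | c, hc⟩
        · obtain ⟨rfl, hc⟩ := hc
          exact ⟨some ⟨_, hc⟩, rfl⟩
        · refine ⟨none, ?_⟩
          have := hS.inj _ _ _ _ hy hc
          subst this
          rfl
        · exact hc.elim
    | lst q hq i =>
      rw [← hz2.fi_card i hr]
      symm
      refine Nat.card_eq_of_bijective (β := {c : NCol Rs C1 Cs C2 fi la //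
        NMat (fi := fi) Ms M1 M2 S T (.lst q hq i) c})
        (fun x => ⟨.lst q hq x.1, rfl, x.2⟩) ⟨?_, ?_⟩
      · rintro ⟨r, hr⟩ ⟨r', hr'⟩ h
        have h := congrArg Subtype.val h
        simpa using h
      · rintro ⟨c | c | c, hc⟩
        · exact hc.elim
        · exact (hz2.disj _ hr (hT.tgt _ _ _ hc)).elim
        · obtain ⟨rfl, hc⟩ := hc
          exact ⟨⟨_, hc⟩, rfl⟩
  la_card := by
    intro r hr
    cases r with
    | star r => exact hr.elim
    | lst p hp i =>
      obtain ⟨y, hy⟩ := hT.ex' p i hp hr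
      rw [← hz2.la_card i hr, ← Finite.card_option]
      symm
      refine Nat.card_eq_of_bijective (β := {c : NCol Rs C1 Cs C2 fi la //
        NMat (fi := fi) Ms M1 M2 S T (.lst p hp i) c})
        (fun o => match o with
          | none => ⟨.star y, hy⟩
          | some x => ⟨.lst p hp x.1, rfl, x.2⟩) ⟨?_, ?_⟩
      · rintro (_ | ⟨r, hr⟩) (_ | ⟨r', hr'⟩) h <;> have h := congrArg Subtype.val h <;> simp at h ⊢
        exact h
      · rintro ⟨c | c | c, hc⟩
        · exact hc.elim
        · refine ⟨none, ?_⟩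
          have := hT.inj _ _ _ _ hy hc
          subst this
          rfl
        · obtain ⟨rfl, hc⟩ := hc
          exact ⟨some ⟨_, hc⟩, rfl⟩
    | fst q hq i =>
      rw [← hz1.la_card i hr]
      symm
      refine Nat.card_eq_of_bijective (β := {c : NCol Rs C1 Cs C2 fi la //
        NMat (la := la) Ms M1 M2 S T (.fst q hq i) c})
        (fun x => ⟨.fst q hq x.1, rfl, x.2⟩) ⟨?_, ?_⟩
      · rintro ⟨r, hr⟩ ⟨r', hr'⟩ h
        have h := congrArg Subtype.val h
        simpa using h
      · rintro ⟨c | c | c, hc⟩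
        · obtain ⟨rfl, hc⟩ := hc
          exact ⟨⟨_, hc⟩, rfl⟩
        · exact (hz1.disj _ (hS.tgt _ _ _ hc) hr).elim
        · exact hc.elim
  col_fi := by
    intro c
    cases c with
    | fst p hp x =>
      obtain ⟨r, h1, h2⟩ := hz1.col_fi x
      exact ⟨.fst p hp r, h1, rfl, h2⟩
    | star y =>
      obtain ⟨r, h1, h2⟩ := hs.col_fi y
      obtain ⟨i, hi⟩ := hS.ex _ _ h1 h2
      exact ⟨.fst r h1 i, hS.tgt _ _ _ hi, hi⟩
    | lst p hp x =>
      obtain ⟨r, h1, h2⟩ := hz2.col_fi x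
      exact ⟨.lst p hp r, h1, rfl, h2⟩
  col_la := by
    intro c
    cases c with
    | fst p hp x =>
      obtain ⟨r, h1, h2⟩ := hz1.col_la x
      exact ⟨.fst p hp r, h1, rfl, h2⟩
    | star y =>
      obtain ⟨r, h1, h2⟩ := hs.col_la y
      obtain ⟨i, hi⟩ := hT.ex _ _ h1 h2
      exact ⟨.lst r h1 i, hT.tgt _ _ _ hi, hi⟩
    | lst p hp x =>
      obtain ⟨r, h1, h2⟩ := hz2.col_la x
      exact ⟨.lst p hp r, h1, rfl, h2⟩
  rest_fi := by
    have a1 := hz1.rest_fi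
    have a2 := hz2.rest_fi
    have b1 := hS.mem
    have b2 := hT.mem
    have c1 := hS.fn
    have c2 := hS.inj
    have t2 := hT.tgt
    have d2 := hz2.disj
    have d1 := hs.fi_first
    intro r x y hr hxy hx hy r1 r2 h1 h2 hm1 hm2
    rw [← not_lt, NRow.lt_iff] at h2
    rw [NRow.lt_iff] at h1
    rw [NCol.lt_iff] at hxy
    cases r <;> simp only [NSp] at hr <;> cases x <;> simp only [NMat] at hx <;>
      cases y <;> simp only [NMat, NCol.ltB] at hy hxy <;>
      cases r1 <;> simp only [NMat, NRow.ltB] at hm1 h1 <;>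
      cases r2 <;> simp only [NMat, NRow.ltB] at hm2 h2 <;> grind
  rest_la := by
    have a1 := hz1.rest_la
    have a2 := hz2.rest_la
    have b1 := hS.mem
    have b2 := hT.mem
    have c1 := hT.fn
    have c2 := hT.inj
    have t2 := hS.tgt
    have d2 := hz1.disj
    have d1 := hs.la_last
    intro r x y hr hxy hx hy r1 r2 h1 h2 hm1 hm2
    rw [← not_lt, NRow.lt_iff] at h1
    rw [NRow.lt_iff] at h2
    rw [NCol.lt_iff] at hxy
    cases r <;> simp only [NSp] at hr <;> cases x <;> simp only [NMat] at hx <;>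
      cases y <;> simp only [NMat, NCol.ltB] at hy hxy <;>
      cases r2 <;> simp only [NMat, NRow.ltB] at hm2 h2 <;>
      cases r1 <;> simp only [NMat, NRow.ltB] at hm1 h1 <;> grind
  mult := by
    intro c
    have := Finite.of_equiv _ (NRow.equiv Rs R1 R2 fi la).symm
    cases c with
    | fst p hp x =>
      refine le_trans (hz1.mult x) ?_
      refine Nat.card_le_card_of_injective (β := {r : NRow Rs R1 R2 fi la //
        NMat (C1 := C1) (C2 := C2) Ms M1 M2 S T r (.fst p hp x)})
        (fun i => ⟨.fst p hp i.1, rfl, i.2⟩) ?_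
      rintro ⟨i, hi⟩ ⟨j, hj⟩ h
      have h := congrArg Subtype.val h
      simpa using h
    | lst p hp x =>
      refine le_trans (hz2.mult x) ?_
      refine Nat.card_le_card_of_injective (β := {r : NRow Rs R1 R2 fi la //
        NMat (C1 := C1) (C2 := C2) Ms M1 M2 S T r (.lst p hp x)})
        (fun i => ⟨.lst p hp i.1, rfl, i.2⟩) ?_
      rintro ⟨i, hi⟩ ⟨j, hj⟩ h
      have h := congrArg Subtype.val h
      simpa using h
    | star y =>
      obtain ⟨p, hp, hpy⟩ := hs.col_fi y
      obtain ⟨i, hi⟩ := hS.ex _ _ hp hpy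
      obtain ⟨q, hq, hqy⟩ := hs.col_la y
      obtain ⟨j, hj⟩ := hT.ex _ _ hq hqy
      have e : Nat.card (Option (Option {r // Ms r y})) = Nat.card {r // Ms r y} + 2 := by
        rw [Finite.card_option, Finite.card_option]
      have := hs.mult y
      refine le_trans (show μ ≤ Nat.card (Option (Option {r // Ms r y})) by omega) ?_
      refine Nat.card_le_card_of_injective (β := {r : NRow Rs R1 R2 fi la //
        NMat (C1 := C1) (C2 := C2) Ms M1 M2 S T r (.star y)})
        (fun o => match o with
          | none => ⟨.fst p hp i, hi⟩
          | some none => ⟨.lst q hq j, hj⟩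
          | some (some r) => ⟨.star r.1, r.2⟩) ?_
      rintro (_ | _ | ⟨r, hr⟩) (_ | _ | ⟨r', hr'⟩) h <;> have h := congrArg Subtype.val h <;> simp at h ⊢
      exact h
end compose

/-- Row-count constants. -/
def K : ℕ → ℕ
  | 0 => 1
  | d + 1 => 2 * K d + 1

lemma K_bd (d : ℕ) : 1 ≤ K d ∧ K d + 1 ≤ 2 ^ (d + 1) := by
  induction d with
  | zero => simp [K]
  | succ d ih => rw [K, pow_succ]; omega

/-- Existence of the structure with multiplicity `2d+2` together with the size bounds. -/
def Exi (d m1 m2 : ℕ) : Prop :=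
  ∃ (R C : Type) (_ : LinearOrder R) (_ : LinearOrder C) (_ : Finite R) (_ : Finite C)
    (M : R → C → Prop) (fi la : R → Prop) (F L : ℕ),
    Zs M fi la m1 m2 (2 * d + 2) ∧ Nat.card {r // fi r} = F ∧ Nat.card {r // la r} = L ∧
    Nat.card R + K d ≤ K d * (F + L) + 1 ∧ Nat.card C = F * m1 ∧ Nat.card C = L * m2 ∧
    (0 < m2 → 1 ≤ F) ∧ (0 < m1 → 1 ≤ L) ∧ F + L ≤ w d (m1 + m2)

lemma exi_zero (m1 m2 : ℕ) : Exi 0 m1 m2 := by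
  refine ⟨Fin (m2 + m1), Fin m2 ×ₗ Fin m1, inferInstance, inferInstance, inferInstance,
    inferInstance, fun r c => r.val = (ofLex c).1.val ∨ r.val = m2 + (ofLex c).2.val,
    fun r => r.val < m2, fun r => m2 ≤ r.val, m2, m1, ?_, ?_, ?_, ?_, ?_, ?_, ?_, ?_, ?_⟩
  · constructor
    · intro x y r1 r2 r3 r4 hxy
      rw [Prod.Lex.lt_iff] at hxy
      have := (ofLex x).1.2
      have := (ofLex y).1.2
      have e : (ofLex x).1 = (ofLex y).1 → (ofLex x).1.val = (ofLex y).1.val := congrArg _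
      simp only [Fin.lt_def] at *
      omega
    · intro r; omega
    · intro r c r' h; have := (ofLex c).1.2; simp only [Fin.le_def]; omega
    · intro r c r' h; have := (ofLex c).1.2; simp only [Fin.le_def]; omega
    · intro r hr
      refine Eq.trans (Eq.symm ?_) (Nat.card_fin m1)
      refine Nat.card_eq_of_bijective (fun j : Fin m1 => ⟨toLex (⟨r.val, hr⟩, j), by simp⟩) ⟨?_, ?_⟩
      · intro i j h
        have h := congrArg Subtype.val h
        simpa using h
      · rintro ⟨c, hc⟩
        refine ⟨(ofLex c).2, ?_⟩
        apply Subtype.ext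
        apply ofLex.injective
        have := (ofLex c).1.2
        refine Prod.ext (Fin.ext ?_) rfl
        simp only [ofLex_toLex]
        omega
    · intro r hr
      have h1 := r.2
      refine Eq.trans (Eq.symm ?_) (Nat.card_fin m2)
      refine Nat.card_eq_of_bijective
        (fun j : Fin m2 => ⟨toLex (j, ⟨r.val - m2, by omega⟩), by simp; omega⟩) ⟨?_, ?_⟩
      · intro i j h
        have h := congrArg Subtype.val h
        simpa using h
      · rintro ⟨c, hc⟩
        refine ⟨(ofLex c).1, ?_⟩
        apply Subtype.ext
        apply ofLex.injective
        have := (ofLex c).1.2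
        refine Prod.ext rfl (Fin.ext ?_)
        simp only [ofLex_toLex]
        omega
    · intro c
      exact ⟨⟨(ofLex c).1.val, by omega⟩, (ofLex c).1.2, Or.inl rfl⟩
    · intro c
      exact ⟨⟨m2 + (ofLex c).2.val, by omega⟩, by simp, Or.inr rfl⟩
    · intro r x y hr hxy h1 h2 r1 r2
      rw [Prod.Lex.lt_iff] at hxy
      have := (ofLex x).1.2
      have := (ofLex y).1.2
      have e : (ofLex x).1 = (ofLex y).1 → (ofLex x).1.val = (ofLex y).1.val := congrArg _
      simp only [Fin.lt_def, Fin.le_def] at *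
      omega
    · intro r x y hr hxy h1 h2 r1 r2
      rw [Prod.Lex.lt_iff] at hxy
      have := (ofLex x).1.2
      have := (ofLex y).1.2
      have e : (ofLex x).1 = (ofLex y).1 → (ofLex x).1.val = (ofLex y).1.val := congrArg _
      simp only [Fin.lt_def, Fin.le_def] at *
      omega
    · intro c
      have : Nontrivial {r : Fin (m2 + m1) //
          r.val = (ofLex c).1.val ∨ r.val = m2 + (ofLex c).2.val} := by
        refine ⟨⟨⟨(ofLex c).1.val, by omega⟩, Or.inl rfl⟩,
          ⟨⟨m2 + (ofLex c).2.val, by omega⟩, Or.inr rfl⟩, ?_⟩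
        intro h
        have h := congrArg (fun z => z.1.val) h
        have := (ofLex c).1.2
        simp only at h
        omega
      exact Finite.one_lt_card
  · refine Eq.trans (Eq.symm ?_) (Nat.card_fin m2)
    refine Nat.card_eq_of_bijective (fun j : Fin m2 => ⟨⟨j.val, by omega⟩, j.2⟩) ⟨?_, ?_⟩
    · intro i j h
      have h := congrArg (fun z => z.1.val) h
      exact Fin.ext h
    · rintro ⟨c, hc⟩
      exact ⟨⟨c.val, hc⟩, rfl⟩
  · refine Eq.trans (Eq.symm ?_) (Nat.card_fin m1)
    refine Nat.card_eq_of_bijective (fun j : Fin m1 => ⟨⟨m2 + j.val, by omega⟩, by simp⟩) ⟨?_, ?_⟩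
    · intro i j h
      have h := congrArg (fun z => z.1.val) h
      simp only at h
      exact Fin.ext (by omega)
    · rintro ⟨c, hc⟩
      refine ⟨⟨c.val - m2, by omega⟩, ?_⟩
      apply Subtype.ext
      apply Fin.ext
      simp only
      omega
  · simp [K]
  · rw [Nat.card_congr (ofLex : Fin m2 ×ₗ Fin m1 ≃ Fin m2 × Fin m1), Nat.card_prod]; simp
  · rw [Nat.card_congr (ofLex : Fin m2 ×ₗ Fin m1 ≃ Fin m2 × Fin m1), Nat.card_prod]
    simp [mul_comm]
  · omega
  · omega
  · simp only [w]; omega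

lemma exi_fst (d m2 : ℕ) : Exi d 0 m2 := by
  refine ⟨Fin 1, Fin 0, inferInstance, inferInstance, inferInstance,
    inferInstance, fun _ _ => False, fun _ => True, fun _ => False, 1, 0, ?_, ?_, ?_, ?_, ?_, ?_,
    ?_, ?_, ?_⟩
  · constructor <;> simp
  · simp
  · simp
  · simp; omega
  · simp
  · simp
  · simp
  · simp
  · exact w_pos _ _

lemma exi_lst (d m1 : ℕ) : Exi d m1 0 := by
  refine ⟨Fin 1, Fin 0, inferInstance, inferInstance, inferInstance,
    inferInstance, fun _ _ => False, fun _ => False, fun _ => True, 0, 1, ?_, ?_, ?_, ?_, ?_, ?_,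
    ?_, ?_, ?_⟩
  · constructor <;> simp
  · simp
  · simp
  · simp; omega
  · simp
  · simp
  · simp
  · simp
  · exact w_pos _ _

lemma card_NSp {Rs R1 R2 : Type} {fi la : Rs → Prop} [Finite Rs] [Finite R1] [Finite R2]
    (s1 : R1 → Prop) (s2 : R2 → Prop) :
    Nat.card {r : NRow Rs R1 R2 fi la // NSp s1 s2 r} =
      Nat.card {r // fi r} * Nat.card {i // s1 i} + Nat.card {r // la r} * Nat.card {i // s2 i} := by
  rw [← Nat.card_prod, ← Nat.card_prod, ← Nat.card_sum]
  refine Nat.card_congr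
    { toFun := fun r => match r with
        | ⟨.fst p hp i, h⟩ => .inl (⟨p, hp⟩, ⟨i, h⟩)
        | ⟨.lst p hp i, h⟩ => .inr (⟨p, hp⟩, ⟨i, h⟩)
        | ⟨.star _, h⟩ => False.elim h
      invFun := fun r => match r with
        | .inl (p, i) => ⟨.fst p.1 p.2 i.1, i.2⟩
        | .inr (p, i) => ⟨.lst p.1 p.2 i.1, i.2⟩
      left_inv := ?_
      right_inv := ?_ }
  · rintro ⟨r | r | r, h⟩
    · exact h.elim
    · rfl
    · rfl
  · rintro (⟨p, i⟩ | ⟨p, i⟩) <;> rfl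

set_option maxHeartbeats 800000 in
lemma exi_step (d m1 m2 : ℕ) (hprev : ∀ a b, Exi d a b) (h1 : Exi (d + 1) m1 (m2 + 1))
    (h2 : Exi (d + 1) (m1 + 1) m2) : Exi (d + 1) (m1 + 1) (m2 + 1) := by
  obtain ⟨R1, C1, _, _, _, _, M1, fi1, la1, F1, L1, z1, cF1, cL1, r1, n1, n1', f1, l1, w1⟩ := h1
  obtain ⟨R2, C2, _, _, _, _, M2, fi2, la2, F2, L2, z2, cF2, cL2, r2, n2, n2', f2, l2, w2⟩ := h2
  obtain ⟨Rs, Cs, _, _, _, _, Ms, fi, la, g1, g2, zs, cg1, cg2, rs, ns, ns', fs, ls, ws⟩ :=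
    hprev F1 L2
  have hF1 : 1 ≤ F1 := f1 (by omega)
  have hL2 : 1 ≤ L2 := l2 (by omega)
  have hg1 : 1 ≤ g1 := fs (by omega)
  have hg2 : 1 ≤ g2 := ls (by omega)
  obtain ⟨S, hS⟩ := exists_ins Ms fi fi1 (fun r hr => (zs.fi_card r hr).trans cF1.symm)
  obtain ⟨T, hT⟩ := exists_ins Ms la la2 (fun r hr => (zs.la_card r hr).trans cL2.symm)
  have eR := Nat.card_congr (NRow.equiv Rs R1 R2 fi la)
  have eC := Nat.card_congr (NCol.equiv Rs C1 Cs C2 fi la)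
  rw [Nat.card_sum, Nat.card_sum, Nat.card_prod, Nat.card_prod, cg1, cg2] at eR eC
  refine ⟨NRow Rs R1 R2 fi la, NCol Rs C1 Cs C2 fi la, inferInstance, inferInstance,
    Finite.of_equiv _ (NRow.equiv Rs R1 R2 fi la).symm,
    Finite.of_equiv _ (NCol.equiv Rs C1 Cs C2 fi la).symm,
    NMat Ms M1 M2 S T, NSp fi1 fi2, NSp la1 la2, g1 * F1 + g2 * F2, g1 * L1 + g2 * L2,
    comp_zs zs z1 z2 hS hT (by omega), ?_, ?_, ?_, ?_, ?_, ?_, ?_, ?_⟩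
  · rw [card_NSp, cg1, cg2, cF1, cF2]
  · rw [card_NSp, cg1, cg2, cL1, cL2]
  · rw [eR]
    have hk := (K_bd d).1
    simp only [K] at *
    generalize K d = k at *
    generalize Nat.card R1 = x1 at *
    generalize Nat.card R2 = x2 at *
    generalize Nat.card Rs = x at *
    have e1 : g1 * (x1 + (2 * k + 1)) ≤ g1 * ((2 * k + 1) * (F1 + L1) + 1) := Nat.mul_le_mul_left _ r1
    have e2 : g2 * (x2 + (2 * k + 1)) ≤ g2 * ((2 * k + 1) * (F2 + L2) + 1) := Nat.mul_le_mul_left _ r2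
    have e3 : k * 2 ≤ k * (g1 + g2) := Nat.mul_le_mul_left _ (by omega)
    nlinarith
  · rw [eC, n1, n2, ns]; ring
  · rw [eC, n1', n2', ns']; ring
  · intro _; exact le_trans (Nat.mul_pos hg1 hF1) (Nat.le_add_right _ _)
  · intro _; exact le_trans (Nat.mul_pos hg2 hL2) (Nat.le_add_left _ _)
  · rw [show m1 + 1 + (m2 + 1) = (m1 + m2 + 1) + 1 by ring, w]
    rw [show m1 + (m2 + 1) = m1 + m2 + 1 by ring] at w1
    rw [show m1 + 1 + m2 = m1 + m2 + 1 by ring] at w2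
    set u := w (d + 1) (m1 + m2 + 1)
    have hw : g1 + g2 ≤ w d (2 * u) := ws.trans (w_mono d (by omega))
    calc g1 * F1 + g2 * F2 + (g1 * L1 + g2 * L2) = g1 * (F1 + L1) + g2 * (F2 + L2) := by ring
      _ ≤ g1 * u + g2 * u := by gcongr
      _ = (g1 + g2) * u := by ring
      _ ≤ _ := by gcongr

lemma exi_all (d : ℕ) : ∀ m1 m2, Exi d m1 m2 := by
  induction d with
  | zero => exact exi_zero
  | succ d ih =>
    intro m1
    induction m1 with
    | zero => exact exi_fst _
    | succ m1 ih1 =>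
      intro m2
      induction m2 with
      | zero => exact exi_lst _ _
      | succ m2 ih2 => exact exi_step d m1 m2 ih (ih1 _) ih2

/-! ## Final assembly -/

lemma exists_final (d : ℕ) : ∃ (N : ℕ) (M : Fin N → Fin N → Prop), 1 ≤ N ∧
    N ≤ w d (2 ^ (d + 3)) * 2 ^ (d + 2) ∧
    (∀ x y r1 r2 r3 r4, x < y → r1 < r2 → r2 < r3 → r3 < r4 →
      M r1 y → M r2 x → M r3 y → M r4 x → False) ∧
    (∀ c, 2 * d + 2 ≤ Nat.card {r // M r c}) := by
  obtain ⟨R, C, _, _, _, _, M, fi, la, F, L, z, cF, cL, hr, n1, n2, f, l, hw⟩ :=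
    exi_all d (2 ^ (d + 2)) (2 ^ (d + 2))
  have hp : 0 < 2 ^ (d + 2) := by positivity
  have hF := f hp
  have hFL : F = L := Nat.eq_of_mul_eq_mul_right hp (n1.symm.trans n2)
  subst hFL
  obtain ⟨k1, k2⟩ := K_bd d
  have hRN : Nat.card R ≤ Nat.card C := by
    rw [n1]
    have : K d * (F + F) ≤ 2 ^ (d + 1) * (F + F) := Nat.mul_le_mul_right _ (by omega)
    calc Nat.card R ≤ K d * (F + F) := by omega
      _ ≤ 2 ^ (d + 1) * (F + F) := this
      _ = _ := by rw [pow_succ 2 (d + 1)]; ring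
  classical
  have := Fintype.ofFinite R
  have := Fintype.ofFinite C
  have eC := Fintype.orderIsoFinOfCardEq C (k := Nat.card C) (Nat.card_eq_fintype_card.symm)
  have eR := Fintype.orderIsoFinOfCardEq R (k := Nat.card R) (Nat.card_eq_fintype_card.symm)
  let ι : R → Fin (Nat.card C) := fun r => Fin.castLE hRN (eR.symm r)
  have hι : StrictMono ι := fun a b h => (Fin.strictMono_castLE hRN) (eR.symm.strictMono h)
  refine ⟨Nat.card C, fun i j => ∃ r, ι r = i ∧ M r (eC j), ?_, ?_, ?_, ?_⟩
  · rw [n1]; exact Nat.mul_pos hF hp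
  · rw [n1]
    have : 2 ^ (d + 2) + 2 ^ (d + 2) = 2 ^ (d + 3) := by rw [pow_succ 2 (d + 2)]; ring
    rw [this] at hw
    exact Nat.mul_le_mul_right _ (by omega)
  · rintro x y _ _ _ _ hxy h12 h23 h34 ⟨r1, rfl, m1⟩ ⟨r2, rfl, m2⟩ ⟨r3, rfl, m3⟩ ⟨r4, rfl, m4⟩
    exact z.avoid (eC x) (eC y) r1 r2 r3 r4 (eC.strictMono hxy) (hι.lt_iff_lt.1 h12)
      (hι.lt_iff_lt.1 h23) (hι.lt_iff_lt.1 h34) m1 m2 m3 m4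
  · intro c
    refine le_trans (z.mult (eC c)) ?_
    refine Nat.card_le_card_of_injective
      (fun r : {r // M r (eC c)} => (⟨ι r.1, r.1, rfl, r.2⟩ :
        {i : Fin (Nat.card C) // ∃ r, ι r = i ∧ M r (eC c)})) ?_
    rintro ⟨r, hr⟩ ⟨r', hr'⟩ h
    have h := congrArg Subtype.val h
    exact Subtype.ext (hι.injective h)


lemma not_full {n : ℕ} (M : Fin n → Fin n → Bool)
    (h : ∀ x y r1 r2 r3 r4, x < y → r1 < r2 → r2 < r3 → r3 < r4 →
      M r1 y = true → M r2 x = true → M r3 y = true → M r4 x = true → False) :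
    ¬ IsFull 4 M := by
  rintro ⟨c, hc, hσ⟩
  obtain ⟨r, hr, hM⟩ := hσ Fin.revPerm
  obtain ⟨s, hs, hN⟩ := hσ (Equiv.swap 0 1 * Equiv.swap 2 3)
  have a0 : M (r 3) (c 0) = true := hM 0
  have a1 : M (r 2) (c 1) = true := hM 1
  have a2 : M (r 1) (c 2) = true := hM 2
  have a3 : M (r 0) (c 3) = true := hM 3
  have b0 : M (s 1) (c 0) = true := hN 0
  have b1 : M (s 0) (c 1) = true := hN 1
  have b2 : M (s 3) (c 2) = true := hN 2
  have b3 : M (s 2) (c 3) = true := hN 3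
  have r01 : r 0 < r 1 := hr (by decide)
  have r12 : r 1 < r 2 := hr (by decide)
  have r23 : r 2 < r 3 := hr (by decide)
  have s01 : s 0 < s 1 := hs (by decide)
  have s12 : s 1 < s 2 := hs (by decide)
  have s23 : s 2 < s 3 := hs (by decide)
  by_cases hlt : s 1 < r 2
  · exact h (c 0) (c 1) (s 0) (s 1) (r 2) (r 3) (hc (by decide)) s01 hlt r23 b1 b0 a1 a0
  · exact h (c 2) (c 3) (r 0) (r 1) (s 2) (s 3) (hc (by decide)) r01
      (r12.trans_le ((not_lt.1 hlt).trans s12.le)) s23 a3 a2 b3 b2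

open Classical in
lemma blocks {N n D : ℕ} (M0 : Fin N → Fin N → Prop) (hN : 1 ≤ N)
    (hav : ∀ x y r1 r2 r3 r4, x < y → r1 < r2 → r2 < r3 → r3 < r4 →
      M0 r1 y → M0 r2 x → M0 r3 y → M0 r4 x → False)
    (hc : ∀ c, D ≤ Nat.card {r // M0 r c}) :
    ∃ M : Fin n → Fin n → Bool, ¬ IsFull 4 M ∧ n / N * N * D ≤ matOnes M := by
  let md : ℕ → Fin N := fun i => ⟨i % N, Nat.mod_lt _ hN⟩
  have key : ∀ a b : ℕ, a < b → a / N = b / N → md a < md b := by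
    intro a b hab he
    have h1 := Nat.div_add_mod a N
    have h2 := Nat.div_add_mod b N
    rw [he] at h1
    simp only [md, Fin.lt_def]
    omega
  have mono : ∀ a b : ℕ, a < b → a / N ≤ b / N := fun a b h => Nat.div_le_div_right h.le
  refine ⟨fun i j => decide (i.val / N = j.val / N ∧ M0 (md i) (md j)), ?_, ?_⟩
  · apply not_full
    intro x y r1 r2 r3 r4 hxy h12 h23 h34 m1 m2 m3 m4
    simp only [decide_eq_true_eq] at m1 m2 m3 m4
    have l1 := mono _ _ h12
    have l2 := mono _ _ h23
    exact hav (md x) (md y) (md r1) (md r2) (md r3) (md r4) (key _ _ hxy (by omega))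
      (key _ _ h12 (by omega)) (key _ _ h23 (by omega)) (key _ _ h34 (by omega)) m1.2 m2.2 m3.2 m4.2
  · have hb : ∀ (k : Fin (n / N)) (a : Fin N), N * k.val + a.val < n := by
      intro k a
      have h1 : N * (k.val + 1) ≤ N * (n / N) := Nat.mul_le_mul_left _ k.2
      have h2 := Nat.mul_div_le n N
      have := a.2
      rw [mul_add] at h1
      omega
    have hd : ∀ (k : Fin (n / N)) (a : Fin N), (N * k.val + a.val) / N = k.val := by
      intro k a
      rw [Nat.mul_add_div hN, Nat.div_eq_of_lt a.2, add_zero]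
    have hm : ∀ (k : Fin (n / N)) (a : Fin N), md (N * k.val + a.val) = a := by
      intro k a
      apply Fin.ext
      simp only [md]
      rw [Nat.mul_add_mod, Nat.mod_eq_of_lt a.2]
    have e1 : n / N * N * D ≤ Nat.card (Fin (n / N) × (Σ c : Fin N, {r // M0 r c})) := by
      rw [Nat.card_prod, Nat.card_sigma, Nat.card_fin, mul_assoc]
      apply Nat.mul_le_mul_left
      calc N * D = ∑ _c : Fin N, D := by simp
        _ ≤ _ := Finset.sum_le_sum (fun c _ => hc c)
    refine e1.trans ?_
    unfold matOnes
    refine Nat.card_le_card_of_injective (fun p =>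
      ⟨(⟨N * p.1.val + p.2.2.1.val, hb _ _⟩, ⟨N * p.1.val + p.2.1.val, hb _ _⟩), ?_⟩) ?_
    · simp only [decide_eq_true_eq, hd, hm, true_and]
      exact p.2.2.2
    · rintro ⟨k, c, r, h⟩ ⟨k', c', r', h'⟩ he
      have he := congrArg Subtype.val he
      simp only [Prod.mk.injEq, Fin.mk.injEq] at he
      obtain ⟨g1, g2⟩ := he
      have hk : k = k' := by
        apply Fin.ext
        rw [← hd k r, g1, hd]
      subst hk
      have hr : r = r' := Fin.ext (by omega)
      have hc : c = c' := Fin.ext (by omega)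
      subst hr
      subst hc
      rfl

end P3

/-- There is a constant `C` such that for every `n ≥ 1` there is an
`n × n` (0,1)-matrix that is not 4-full with at least `2·n·α(n) − C·n` `1`-entries. -/
theorem p3_lower_bound :
    ∃ C : ℝ, ∀ n : ℕ, 1 ≤ n →
      ∃ M : Fin n → Fin n → Bool, ¬ IsFull 4 M ∧
        2 * (n : ℝ) * (invAck n : ℝ) - C * (n : ℝ) ≤ (matOnes M : ℝ) := by
  refine ⟨12, fun n hn => ?_⟩
  by_cases hα : 6 ≤ invAck n
  · obtain ⟨d, hd⟩ : ∃ d, invAck n = d + 6 := ⟨invAck n - 6, by omega⟩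
    obtain ⟨N, M0, hN, hNw, hav, hc⟩ := P3.exists_final d
    have hs := P3.size_le_of_invAck d n hd.ge
    have hNn : N * (d + 1) ≤ n := le_trans (Nat.mul_le_mul_right _ hNw) hs
    obtain ⟨M, hM, hones⟩ := P3.blocks (n := n) M0 hN hav hc
    refine ⟨M, hM, ?_⟩
    have h1 : n ≤ n / N * N + N := by
      have e1 := Nat.div_add_mod n N
      have e2 := Nat.mod_lt n hN
      have e3 := mul_comm N (n / N)
      omega
    have h2 : 2 * n * d ≤ matOnes M := by
      have h3 : n * (2 * d + 2) ≤ (n / N * N + N) * (2 * d + 2) := Nat.mul_le_mul_right _ h1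
      have h4 : (n / N * N + N) * (2 * d + 2) = n / N * N * (2 * d + 2) + 2 * (N * (d + 1)) := by
        ring
      have h5 : n * (2 * d + 2) = 2 * n * d + 2 * n := by ring
      omega
    have h6 : (2 * n * d : ℝ) ≤ (matOnes M : ℝ) := by exact_mod_cast h2
    rw [hd]
    push_cast
    linarith
  · refine ⟨fun _ _ => false, ?_, ?_⟩
    · apply P3.not_full
      intro x y r1 r2 r3 r4 _ _ _ _ h
      exact absurd h (by decide)
    · have h1 : (invAck n : ℝ) ≤ 6 := by exact_mod_cast (by omega : invAck n ≤ 6)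
      have h2 : (0 : ℝ) ≤ n := Nat.cast_nonneg n
      have h3 : (0 : ℝ) ≤ (matOnes (fun _ _ => false : Fin n → Fin n → Bool) : ℝ) :=
        Nat.cast_nonneg _
      nlinarith
end
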